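/- Let H be a forest and let H' be the star-expansion of H. Then there exists a real number τ > 0 such that every graph G that is both H̄-free and H'-free satisfies max(α(G), ω(G)) ≥ |G|^τ; that is, {H̄, H'} has the Erdős–Hajnal property. -/

import Mathlib

open SimpleGraph

/-- The independence (stable set) number of a graph: the clique number of the complement. -/
noncomputable def alphaNum {V : Type*} (G : SimpleGraph V) : ℕ := Gᶜ.cliqueNum

/-- The clique number of a graph. -/
noncomputable def omegaNum {V : Type*} (G : SimpleGraph V) : ℕ := G.cliqueNum

/-- κ(G) = α(G)·ω(G). -/
noncomputable def kappaNum {V : Type*} (G : SimpleGraph V) : ℕ := alphaNum G * omegaNum G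

/-- The star-expansion of `H`: for each vertex `b` of `H`, add a new vertex `a_b` adjacent
to `b` only, and add one further vertex `v` adjacent to all of the `a_b` and nothing else. -/
def starExpansion {W : Type*} (H : SimpleGraph W) : SimpleGraph (W ⊕ W ⊕ Unit) :=
  SimpleGraph.fromRel (fun x y =>
    match x, y with
    | Sum.inl b, Sum.inl b' => H.Adj b b'
    | Sum.inl b, Sum.inr (Sum.inl a) => b = a
    | Sum.inr (Sum.inl _), Sum.inr (Sum.inr _) => True
    | _, _ => False)

/-- The largest size of a clique of `G` contained in `P`. -/
noncomputable def cliqueNumIn {V : Type} (G : SimpleGraph V) (P : Finset V) : ℕ :=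
  open Classical in (P.powerset.filter (fun Q : Finset V => G.IsClique (Q : Set V))).sup Finset.card

lemma IsClique.card_le_cliqueNumIn {V : Type} {G : SimpleGraph V} {P Q : Finset V} (hQP : Q ⊆ P)
    (hQ : G.IsClique (Q : Set V)) : Q.card ≤ cliqueNumIn G P := by
  classical
  unfold cliqueNumIn
  exact Finset.le_sup (f := Finset.card) (by simp [hQP, hQ])

lemma exists_isClique_card_eq {V : Type} (G : SimpleGraph V) (P : Finset V) :
    ∃ Q ⊆ P, G.IsClique (Q : Set V) ∧ Q.card = cliqueNumIn G P := by
  classical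
  obtain ⟨Q, hQ, h⟩ := Finset.exists_mem_eq_sup
    (P.powerset.filter (fun Q : Finset V => G.IsClique (Q : Set V))) ⟨∅, by simp⟩ Finset.card
  refine ⟨Q, by simp_all, by simp_all, ?_⟩
  unfold cliqueNumIn
  convert h.symm

lemma cliqueNumIn_mono {V : Type} (G : SimpleGraph V) {P Q : Finset V} (h : Q ⊆ P) :
    cliqueNumIn G Q ≤ cliqueNumIn G P := by
  obtain ⟨R, hR, hc, he⟩ := exists_isClique_card_eq G Q
  exact he ▸ IsClique.card_le_cliqueNumIn (hR.trans h) hc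

lemma one_le_cliqueNumIn {V : Type} (G : SimpleGraph V) {P : Finset V} (h : P.Nonempty) :
    1 ≤ cliqueNumIn G P := by
  obtain ⟨x, hx⟩ := h
  have := IsClique.card_le_cliqueNumIn (G := G) (P := P) (Q := {x}) (by simpa) (by simp)
  simpa using this

lemma cliqueNumIn_le_card {V : Type} (G : SimpleGraph V) (P : Finset V) :
    cliqueNumIn G P ≤ P.card := by
  obtain ⟨R, hR, -, he⟩ := exists_isClique_card_eq G P
  exact he ▸ Finset.card_le_card hR

/-- The product of the clique number and the stability number of `G` on `P`. -/
noncomputable def homProd {V : Type} (G : SimpleGraph V) (P : Finset V) : ℕ :=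
  cliqueNumIn G P * cliqueNumIn Gᶜ P

lemma homProd_compl {V : Type} (G : SimpleGraph V) (P : Finset V) :
    homProd Gᶜ P = homProd G P := by
  simp [homProd, mul_comm]

lemma homProd_mono {V : Type} (G : SimpleGraph V) {P Q : Finset V} (h : Q ⊆ P) :
    homProd G Q ≤ homProd G P :=
  Nat.mul_le_mul (cliqueNumIn_mono G h) (cliqueNumIn_mono _ h)

lemma one_le_homProd {V : Type} (G : SimpleGraph V) {P : Finset V} (h : P.Nonempty) :
    1 ≤ homProd G P :=
  Nat.mul_pos (one_le_cliqueNumIn G h) (one_le_cliqueNumIn _ h)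

lemma homProd_singleton {V : Type} (G : SimpleGraph V) (x : V) : homProd G {x} = 1 := by
  have h1 := cliqueNumIn_le_card G {x}
  have h2 := cliqueNumIn_le_card Gᶜ {x}
  have h3 := one_le_cliqueNumIn G (P := {x}) (by simp)
  have h4 := one_le_cliqueNumIn Gᶜ (P := {x}) (by simp)
  simp only [Finset.card_singleton] at h1 h2
  simp [homProd, le_antisymm h1 h3, le_antisymm h2 h4]

lemma two_le_homProd {V : Type} (G : SimpleGraph V) {P : Finset V} (h : 2 ≤ P.card) :
    2 ≤ homProd G P := by
  classical
  obtain ⟨x, hx, y, hy, hxy⟩ := Finset.one_lt_card.1 (show 1 < P.card from h)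
  have hP : P.Nonempty := ⟨x, hx⟩
  have h3 := one_le_cliqueNumIn G hP
  have h4 := one_le_cliqueNumIn Gᶜ hP
  have hsub : ({x, y} : Finset V) ⊆ P := by
    intro z hz
    simp only [Finset.mem_insert, Finset.mem_singleton] at hz
    rcases hz with rfl | rfl <;> assumption
  have hc : ({x, y} : Finset V).card = 2 := Finset.card_pair hxy
  unfold homProd
  by_cases ha : G.Adj x y
  · have := IsClique.card_le_cliqueNumIn (G := G) hsub (by simp [hxy, ha])
    nlinarith
  · have := IsClique.card_le_cliqueNumIn (G := Gᶜ) hsub (by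
      rw [Finset.coe_pair, SimpleGraph.isClique_pair]
      intro h
      exact (compl_adj _ _ _).2 ⟨h, ha⟩)
    nlinarith

/-- Adding up stable sets: if the stability number of `A` is realised by `Z` and `B` is
anticomplete to `Z`, the products on `A` and `B` add up. -/
lemma homProd_add_le {V : Type} (G : SimpleGraph V) {P A B Z : Finset V} (hA : A ⊆ P) (hB : B ⊆ P)
    (hZA : Z ⊆ A) (hZ : Gᶜ.IsClique (Z : Set V)) (hcard : Z.card = cliqueNumIn Gᶜ A)
    (hZB : ∀ z ∈ Z, ∀ b ∈ B, z ≠ b ∧ ¬ G.Adj z b) :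
    homProd G A + homProd G B ≤ homProd G P := by
  classical
  obtain ⟨Y, hYB, hY, hYc⟩ := exists_isClique_card_eq Gᶜ B
  have hdisj : Disjoint Z Y := by
    rw [Finset.disjoint_left]
    intro z hz hz'
    exact (hZB z hz z (hYB hz')).1 rfl
  have hcl : Gᶜ.IsClique ((Z ∪ Y : Finset V) : Set V) := by
    intro a ha b hb hab
    simp only [Finset.coe_union, Set.mem_union, Finset.mem_coe] at ha hb
    rcases ha with ha | ha <;> rcases hb with hb | hb
    · exact hZ ha hb hab
    · exact (compl_adj _ _ _).2 (hZB a ha b (hYB hb))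
    · exact ((compl_adj _ _ _).2 (hZB b hb a (hYB ha))).symm
    · exact hY ha hb hab
  have h1 := IsClique.card_le_cliqueNumIn (Finset.union_subset (hZA.trans hA) (hYB.trans hB)) hcl
  rw [Finset.card_union_of_disjoint hdisj, hcard, hYc] at h1
  have h2 := cliqueNumIn_mono G hA
  have h3 := cliqueNumIn_mono G hB
  unfold homProd
  calc _ ≤ cliqueNumIn G P * cliqueNumIn Gᶜ A + cliqueNumIn G P * cliqueNumIn Gᶜ B := by gcongr
    _ = cliqueNumIn G P * (cliqueNumIn Gᶜ A + cliqueNumIn Gᶜ B) := by ring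
    _ ≤ _ := by gcongr

/-- Logarithm of the size of a finite set. -/
noncomputable def logCard {V : Type} (P : Finset V) : ℝ := Real.log P.card

/-- Logarithm of `homProd`. -/
noncomputable def logHom {V : Type} (G : SimpleGraph V) (P : Finset V) : ℝ :=
  Real.log (homProd G P)

lemma logCard_mono {V : Type} {P Q : Finset V} (hQ : Q.Nonempty) (h : Q ⊆ P) :
    logCard Q ≤ logCard P :=
  Real.log_le_log (by exact_mod_cast hQ.card_pos) (by exact_mod_cast Finset.card_le_card h)

lemma logHom_nonneg {V : Type} (G : SimpleGraph V) (P : Finset V) : 0 ≤ logHom G P :=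
  Real.log_natCast_nonneg _

lemma logHom_mono {V : Type} (G : SimpleGraph V) {P Q : Finset V} (hQ : Q.Nonempty) (h : Q ⊆ P) :
    logHom G Q ≤ logHom G P :=
  Real.log_le_log (by exact_mod_cast one_le_homProd G hQ) (by exact_mod_cast homProd_mono G h)

lemma logHom_compl {V : Type} (G : SimpleGraph V) (P : Finset V) : logHom Gᶜ P = logHom G P := by
  simp [logHom, homProd_compl]

/-- `P` is critical with exponent `ρ` and slack `s`: passing to a subset costs `homProd` no more
than the power `ρ` of the loss in size, up to a factor `exp s`. -/
def Critical {V : Type} (G : SimpleGraph V) (ρ s : ℝ) (P : Finset V) : Prop :=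
  ∀ Q ⊆ P, Q.Nonempty → logHom G P + ρ * (logCard Q - logCard P) ≤ s + logHom G Q

lemma Critical.compl {V : Type} {G : SimpleGraph V} {ρ s : ℝ} {P : Finset V}
    (h : Critical G ρ s P) : Critical Gᶜ ρ s P := by
  intro Q hQ hne
  simpa [logHom_compl] using h Q hQ hne

lemma Critical.subset {V : Type} {G : SimpleGraph V} {ρ s : ℝ} {P Q : Finset V}
    (h : Critical G ρ s P) (hQ : Q ⊆ P) (hne : Q.Nonempty) :
    Critical G ρ (s + ρ * (logCard P - logCard Q)) Q := by
  intro R hR hRne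
  have h1 := h R (hR.trans hQ) hRne
  have h2 := logHom_mono G hne hQ
  nlinarith

lemma Critical.weaken {V : Type} {G : SimpleGraph V} {ρ ρ' s s' : ℝ} {P : Finset V}
    (h : Critical G ρ s P) (hρ : ρ ≤ ρ') (hs : s ≤ s') : Critical G ρ' s' P := by
  intro R hR hRne
  have h1 := h R hR hRne
  have h2 := logCard_mono hRne hR
  nlinarith

lemma exists_critical_subset {V : Type} (G : SimpleGraph V) (ρ : ℝ) {U : Finset V}
    (hU : U.Nonempty) : ∃ P ⊆ U, P.Nonempty ∧ Critical G ρ 0 P ∧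
      logHom G P + ρ * (logCard U - logCard P) ≤ logHom G U := by
  classical
  obtain ⟨P, hP, hmin⟩ := Finset.exists_min_image (U.powerset.filter (·.Nonempty))
    (fun P => logHom G P - ρ * logCard P) ⟨U, by simpa⟩
  simp only [Finset.mem_filter, Finset.mem_powerset] at hP hmin
  refine ⟨P, hP.1, hP.2, ?_, ?_⟩
  · intro Q hQ hne
    have := hmin Q ⟨hQ.trans hP.1, hne⟩
    linarith
  · have := hmin U ⟨subset_rfl, hU⟩
    linarith

lemma Critical.extract {V : Type} {G : SimpleGraph V} {ρ s : ℝ} {U : Finset V}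
    (h : Critical G ρ s U) (hU : U.Nonempty) (ρ' : ℝ) :
    ∃ P ⊆ U, P.Nonempty ∧ Critical G ρ' 0 P ∧ (ρ' - ρ) * (logCard U - logCard P) ≤ s := by
  obtain ⟨P, hP, hne, hc, hle⟩ := exists_critical_subset G ρ' hU
  refine ⟨P, hP, hne, hc, ?_⟩
  have := h P hP hne
  linarith

/-- `G` itself or its complement. -/
def side {V : Type} (G : SimpleGraph V) : Bool → SimpleGraph V
  | true => G
  | false => Gᶜ

/-- The neighbours of `a` in `T`. -/
noncomputable def nbrIn {V : Type} (G : SimpleGraph V) (a : V) (T : Finset V) : Finset V :=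
  open Classical in T.filter (G.Adj a)

@[simp] lemma mem_nbrIn {V : Type} {G : SimpleGraph V} {a u : V} {T : Finset V} :
    u ∈ nbrIn G a T ↔ u ∈ T ∧ G.Adj a u := by
  simp [nbrIn]

lemma nbrIn_subset {V : Type} (G : SimpleGraph V) (a : V) (T : Finset V) : nbrIn G a T ⊆ T := by
  intro u hu
  exact (mem_nbrIn.1 hu).1

lemma nbrIn_mono {V : Type} (G : SimpleGraph V) (a : V) {S T : Finset V} (h : S ⊆ T) :
    nbrIn G a S ⊆ nbrIn G a T := by
  intro u hu
  rw [mem_nbrIn] at hu ⊢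
  exact ⟨h hu.1, hu.2⟩

lemma side_adj_ne {V : Type} {G : SimpleGraph V} {t : Bool} {a b : V} (h : (side G t).Adj a b) :
    a ≠ b := h.ne

lemma adj_iff_of_side {V : Type} {G : SimpleGraph V} {p : Prop} [Decidable p] {a b : V}
    (h : (side G (decide p)).Adj a b) : G.Adj a b ↔ p := by
  by_cases hp : p
  · simp only [hp, decide_true, side] at h
    simp [h, hp]
  · simp only [hp, decide_false, side, compl_adj] at h
    simp [h.2, hp]

/-- Either a transversal copy of `X`, or a large pair that is sparse in `G` or its complement. -/
lemma transversal_copy_or_sparse_pair (k : ℕ) (X : SimpleGraph (Fin k)) (ε : ℝ) (hε : 0 < ε) :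
    ∃ δ : ℝ, 0 < δ ∧ ∀ (V : Type) (G : SimpleGraph V) (C : Fin k → Finset V) (c : ℕ), 0 < c →
      (∀ i, (C i).card = c) →
      (∃ φ : Fin k → V, (∀ i, φ i ∈ C i) ∧ Function.Injective φ ∧
        ∀ i j, G.Adj (φ i) (φ j) ↔ X.Adj i j) ∨
      ∃ (i j : Fin k) (t : Bool) (A T : Finset V), A ⊆ C i ∧ T ⊆ C j ∧ δ * c ≤ T.card ∧
        T.card ≤ k * A.card ∧ ∀ a ∈ A, ((nbrIn (side G t) a T).card : ℝ) ≤ ε * T.card := by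
  classical
  induction k with
  | zero =>
    refine ⟨1, one_pos, fun V G C c _ _ => Or.inl ⟨Fin.elim0, fun i => i.elim0, ?_, ?_⟩⟩
    · intro i
      exact i.elim0
    · intro i
      exact i.elim0
  | succ k ih =>
    obtain ⟨δ, hδ, h⟩ := ih (X.comap Fin.succ)
    refine ⟨min 1 (δ * ε), by positivity, fun V G C c hc hC => ?_⟩
    set tp : Fin k → Bool := fun j => decide (X.Adj 0 j.succ) with htp
    by_cases hgood : ∃ v ∈ C 0, ∀ j : Fin k,
        ε * c ≤ ((nbrIn (side G (tp j)) v (C j.succ)).card : ℝ)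
    · obtain ⟨v, hv, hvj⟩ := hgood
      have hex : ∀ j : Fin k, ∃ B ⊆ nbrIn (side G (tp j)) v (C j.succ), B.card = ⌈ε * c⌉₊ :=
        fun j => Finset.exists_subset_card_eq (Nat.ceil_le.2 (hvj j))
      choose B hB hBc using hex
      have hcpos : 0 < ⌈ε * (c : ℝ)⌉₊ := Nat.ceil_pos.2 (by positivity)
      rcases h V G B _ hcpos hBc with ⟨φ, hφ, hinj, hadj⟩ | ⟨i, j, t, A, T, hA, hT, hTc, hTA, hs⟩
      · left
        have key : ∀ j, (side G (tp j)).Adj v (φ j) := fun j => (mem_nbrIn.1 (hB j (hφ j))).2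
        refine ⟨Fin.cons v φ, ?_, ?_, ?_⟩
        · intro i
          refine Fin.cases hv (fun j => ?_) i
          exact (mem_nbrIn.1 (hB j (hφ j))).1
        · rw [Fin.cons_injective_iff]
          refine ⟨?_, hinj⟩
          rintro ⟨j, hj⟩
          exact side_adj_ne (key j) hj.symm
        · intro i j
          refine Fin.cases ?_ (fun i => ?_) i <;> refine Fin.cases ?_ (fun j => ?_) j
          · simp
          · simpa using adj_iff_of_side (key j)
          · have := adj_iff_of_side (key i)
            simp only [Fin.cons_succ, Fin.cons_zero]
            rw [G.adj_comm, this, X.adj_comm]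
          · simpa using hadj i j
      · right
        refine ⟨i.succ, j.succ, t, A, T, hA.trans ((hB i).trans (nbrIn_subset _ _ _)),
          hT.trans ((hB j).trans (nbrIn_subset _ _ _)), ?_, hTA.trans ?_, hs⟩
        · calc min 1 (δ * ε) * c ≤ (δ * ε) * c := by gcongr; exact min_le_right _ _
            _ = δ * (ε * c) := by ring
            _ ≤ δ * (⌈ε * (c : ℝ)⌉₊ : ℝ) := by gcongr; exact Nat.le_ceil _
            _ ≤ _ := hTc
        · gcongr
          omega
    · right
      push Not at hgood
      have hk : 0 < k := by
        obtain ⟨v, hv⟩ : (C 0).Nonempty := Finset.card_pos.1 (by rw [hC]; exact hc)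
        exact Fin.pos (hgood v hv).choose
      have : NeZero k := ⟨hk.ne'⟩
      choose! f hf using hgood
      have hk' : (0 : ℝ) < k := by exact_mod_cast hk
      obtain ⟨j, -, hj⟩ := Finset.exists_le_card_fiber_of_nsmul_le_card_of_maps_to
        (s := C 0) (t := Finset.univ) (f := f) (b := (c : ℝ) / k) (by simp)
        ⟨0, by simp⟩ (by
          rw [hC, Finset.card_univ, Fintype.card_fin, nsmul_eq_mul]
          field_simp
          exact le_rfl)
      refine ⟨0, j.succ, tp j, (C 0).filter (fun x => f x = j), C j.succ, Finset.filter_subset _ _,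
        subset_rfl, ?_, ?_, ?_⟩
      · rw [hC]
        exact mul_le_of_le_one_left (by positivity) (min_le_left _ _)
      · rw [div_le_iff₀ hk'] at hj
        have h2 : c ≤ ((C 0).filter (fun x => f x = j)).card * k := by exact_mod_cast hj
        rw [hC]
        nlinarith
      · intro a ha
        rw [Finset.mem_filter] at ha
        have := hf a ha.1
        rw [ha.2] at this
        rw [hC]
        exact this.le

lemma exists_sparse_pair (k : ℕ) (X : SimpleGraph (Fin k)) (ε : ℝ) (hε : 0 < ε) :
    ∃ δ : ℝ, 0 < δ ∧ ∀ (V : Type) (G : SimpleGraph V), ¬ Nonempty (X ↪g G) →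
      ∀ P : Finset V, P.Nonempty → ∃ (t : Bool) (A T : Finset V), A ⊆ P ∧ T ⊆ P ∧
        δ * P.card ≤ T.card ∧ T.card ≤ k * A.card ∧
        ∀ a ∈ A, ((nbrIn (side G t) a T).card : ℝ) ≤ ε * T.card := by
  obtain ⟨δ, hδ, h⟩ := transversal_copy_or_sparse_pair k X ε hε
  refine ⟨δ, hδ, fun V G hX P hP => ?_⟩
  rcases h V G (fun _ => P) P.card hP.card_pos (fun _ => rfl) with ⟨φ, -, hinj, hadj⟩ |
    ⟨_, _, t, A, T, h⟩
  · exact (hX ⟨⟨⟨φ, hinj⟩, fun {a b} => hadj a b⟩⟩).elim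
  · exact ⟨t, A, T, h⟩

lemma sum_card_nbrIn_comm {V : Type} (G : SimpleGraph V) (S T : Finset V) :
    ∑ x ∈ S, (nbrIn G x T).card = ∑ y ∈ T, (nbrIn G y S).card := by
  classical
  have := Finset.sum_card_bipartiteAbove_eq_sum_card_bipartiteBelow (s := S) (t := T) G.Adj
  simp only [Finset.bipartiteAbove, Finset.bipartiteBelow] at this
  unfold nbrIn
  convert this using 4
  rw [G.adj_comm]

lemma card_nbrIn_union_le {V : Type} [DecidableEq V] (G : SimpleGraph V) (x : V) (S T : Finset V) :
    (nbrIn G x (S ∪ T)).card ≤ (nbrIn G x S).card + (nbrIn G x T).card := by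
  refine (Finset.card_le_card (t := nbrIn G x S ∪ nbrIn G x T) ?_).trans (Finset.card_union_le _ _)
  intro u hu
  simp only [Finset.mem_union, mem_nbrIn] at hu ⊢
  tauto

/-- Large subsets with few edges in `G` or in its complement. -/
lemma exists_sparse_union (k : ℕ) (X : SimpleGraph (Fin k)) (N : ℕ) :
    ∀ n : Bool → ℕ, n true + n false = N → ∃ δ L : ℝ, 0 < δ ∧ 0 < L ∧
      ∀ (V : Type) (G : SimpleGraph V), ¬ Nonempty (X ↪g G) →
        ∀ P : Finset V, L ≤ P.card → ∃ (t : Bool) (s : ℕ) (R : Finset V), δ * P.card ≤ s ∧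
          s ≤ P.card ∧ R ⊆ P ∧ R.card = n t * s ∧
          ∑ x ∈ R, (nbrIn (side G t) x R).card ≤ 3 * n t * s ^ 2 := by
  classical
  induction N with
  | zero =>
    intro n hn
    refine ⟨1, 1, one_pos, one_pos, fun V G _ P _ => ⟨true, P.card, ∅, by simp, le_rfl, by simp,
      ?_, by simp⟩⟩
    simp
    omega
  | succ N ih =>
    intro n hn
    by_cases hz : ∃ t, n t = 0
    · obtain ⟨t, ht⟩ := hz
      exact ⟨1, 1, one_pos, one_pos, fun V G _ P _ => ⟨t, P.card, ∅, by simp, le_rfl, by simp,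
        by simp [ht], by simp⟩⟩
    push Not at hz
    have hdec : ∀ t, ∃ δ L : ℝ, 0 < δ ∧ 0 < L ∧
      ∀ (V : Type) (G : SimpleGraph V), ¬ Nonempty (X ↪g G) →
        ∀ P : Finset V, L ≤ P.card → ∃ (t' : Bool) (s : ℕ) (R : Finset V), δ * P.card ≤ s ∧
          s ≤ P.card ∧ R ⊆ P ∧ R.card = Function.update n t (n t - 1) t' * s ∧
          ∑ x ∈ R, (nbrIn (side G t') x R).card ≤
            3 * Function.update n t (n t - 1) t' * s ^ 2 := by
      intro t
      apply ih
      have h1 := hz true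
      have h2 := hz false
      cases t <;> simp <;> omega
    choose δ L hδ hL h using hdec
    set d := min (δ true) (δ false) with hd
    have hdpos : 0 < d := lt_min (hδ _) (hδ _)
    have hdle : ∀ t, d ≤ δ t := by
      intro t
      cases t
      · exact min_le_right _ _
      · exact min_le_left _ _
    set M := max (L true) (L false) with hM
    have hMpos : 0 < M := lt_max_of_lt_left (hL _)
    have hMle : ∀ t, L t ≤ M := by
      intro t
      cases t
      · exact le_max_right _ _
      · exact le_max_left _ _
    have hk3 : (0 : ℝ) < k + 3 := by positivity
    obtain ⟨e, he, hpair⟩ := exists_sparse_pair k X (d / (k + 3)) (by positivity)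
    refine ⟨d * e / (k + 3), (k + 3) * (M + 2) / e, by positivity, by positivity,
      fun V G hX P hP => ?_⟩
    have hPpos : (0 : ℝ) < P.card := lt_of_lt_of_le (by positivity) hP
    obtain ⟨t, A, T, hA, hT, hTc, hTA, hs⟩ := hpair V G hX P (Finset.card_pos.1 (by exact_mod_cast hPpos))
    rw [div_le_iff₀ he] at hP
    have hTbig : (k + 3) * (M + 2) ≤ (T.card : ℝ) := by linarith
    have hT6 : 6 ≤ T.card := by
      have : (6 : ℝ) ≤ T.card := by
        have : (0 : ℝ) ≤ k := by positivity
        nlinarith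
      exact_mod_cast this
    set r := min A.card (T.card / 2) with hr
    have hrT : T.card ≤ (k + 3) * r := by
      rcases le_total A.card (T.card / 2) with h' | h'
      · rw [hr, min_eq_left h']
        nlinarith
      · rw [hr, min_eq_right h']
        have : T.card ≤ 3 * (T.card / 2) := by omega
        nlinarith
    have hrT' : (T.card : ℝ) ≤ (k + 3) * r := by exact_mod_cast hrT
    obtain ⟨A0, hA0, hA0c⟩ := Finset.exists_subset_card_eq (min_le_left A.card (T.card / 2))
    have hcard : r ≤ (T \ A0).card := by
      have h1 := Finset.le_card_sdiff A0 T
      have h2 : r ≤ T.card / 2 := min_le_right _ _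
      omega
    obtain ⟨T', hT', hT'c⟩ := Finset.exists_subset_card_eq hcard
    have hrM : M ≤ r := by
      have : (k + 3) * (M + 2) ≤ (k + 3) * (r : ℝ) := by linarith
      have := le_of_mul_le_mul_left this hk3
      linarith
    obtain ⟨t', s, R, hs1, hs2, hR, hRc, hRsum⟩ := h t V G hX T' (by
      rw [hT'c]
      exact (hMle t).trans hrM)
    rw [hT'c] at hs1 hs2
    have hT'T : T' ⊆ T := hT'.trans Finset.sdiff_subset
    have hds : d * r ≤ s := le_trans (by gcongr; exact hdle t) hs1
    have hcommon1 : d * e / (k + 3) * P.card ≤ s := by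
      refine le_trans ?_ hds
      rw [div_mul_eq_mul_div, div_le_iff₀ hk3]
      nlinarith
    have hcommon2 : s ≤ P.card := by
      refine hs2.trans ((min_le_left _ _).trans (Finset.card_le_card hA))
    by_cases htt : t' = t
    · subst htt
      rw [Function.update_self] at hRc hRsum
      have hsA0 : s ≤ A0.card := by omega
      obtain ⟨A', hA', hA'c⟩ := Finset.exists_subset_card_eq hsA0
      have hdisj : Disjoint R A' := by
        rw [Finset.disjoint_left]
        intro x hx hx'
        exact (Finset.mem_sdiff.1 (hT' (hR hx))).2 (hA' hx')
      have hn1 : n t' = (n t' - 1) + 1 := by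
        have := hz t'
        omega
      refine ⟨t', s, R ∪ A', hcommon1, hcommon2, ?_, ?_, ?_⟩
      · exact Finset.union_subset (hR.trans (hT'T.trans hT)) (hA'.trans (hA0.trans hA))
      · rw [Finset.card_union_of_disjoint hdisj, hRc, hA'c]
        conv_rhs => rw [hn1]
        ring
      · have hcross : ∑ x ∈ A', (nbrIn (side G t') x R).card ≤ s * s := by
          rw [← hA'c, ← smul_eq_mul]
          apply Finset.sum_le_card_nsmul
          intro a ha
          have h1 := hs a (hA0 (hA' ha))
          have h2 : (nbrIn (side G t') a R).card ≤ (nbrIn (side G t') a T).card :=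
            Finset.card_le_card (nbrIn_mono _ _ (hR.trans hT'T))
          have h3 : d / (k + 3) * T.card ≤ s := by
            refine le_trans ?_ hds
            rw [div_mul_eq_mul_div, div_le_iff₀ hk3]
            nlinarith
          rw [hA'c]
          have h4 : ((nbrIn (side G t') a T).card : ℝ) ≤ s := h1.trans h3
          exact h2.trans (by exact_mod_cast h4)
        have hin : ∑ x ∈ A', (nbrIn (side G t') x A').card ≤ s * s := by
          conv_rhs => rw [← hA'c, ← smul_eq_mul]
          apply Finset.sum_le_card_nsmul
          intro a _
          exact Finset.card_le_card (nbrIn_subset _ _ _)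
        calc ∑ x ∈ R ∪ A', (nbrIn (side G t') x (R ∪ A')).card
            ≤ ∑ x ∈ R ∪ A', ((nbrIn (side G t') x R).card + (nbrIn (side G t') x A').card) :=
              Finset.sum_le_sum fun x _ => card_nbrIn_union_le _ _ _ _
          _ = ∑ x ∈ R, (nbrIn (side G t') x R).card + ∑ x ∈ A', (nbrIn (side G t') x R).card +
              (∑ x ∈ A', (nbrIn (side G t') x R).card + ∑ x ∈ A', (nbrIn (side G t') x A').card) := by
            rw [Finset.sum_add_distrib, Finset.sum_union hdisj, Finset.sum_union hdisj,
              sum_card_nbrIn_comm _ R A']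
          _ ≤ 3 * (n t' - 1) * s ^ 2 + s * s + (s * s + s * s) := by gcongr
          _ = 3 * (n t' - 1 + 1) * s ^ 2 := by ring
          _ = _ := by rw [← hn1]
    · rw [Function.update_of_ne htt] at hRc hRsum
      exact ⟨t', s, R, hcommon1, hcommon2, hR.trans (hT'T.trans hT), hRc, hRsum⟩

/-- A graph with no copy of `X` has a large subset on which `G` or its complement has small
maximum degree. -/
lemma exists_small_degree_subset (k : ℕ) (X : SimpleGraph (Fin k)) (ε : ℝ) (hε : 0 < ε) :
    ∃ δ L : ℝ, 0 < δ ∧ 0 < L ∧ ∀ (V : Type) (G : SimpleGraph V), ¬ Nonempty (X ↪g G) →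
      ∀ P : Finset V, L ≤ P.card → ∃ (t : Bool) (R : Finset V), R ⊆ P ∧ R.Nonempty ∧
        δ * P.card ≤ R.card ∧ ∀ x ∈ R, ((nbrIn (side G t) x R).card : ℝ) ≤ ε * R.card := by
  classical
  obtain ⟨n, hn⟩ := exists_nat_gt (12 / ε)
  have hn0 : (0 : ℝ) < n := lt_trans (by positivity) hn
  obtain ⟨δ, L, hδ, hL, h⟩ := exists_sparse_union k X _ (fun _ => n) rfl
  refine ⟨δ / 2, L, by positivity, hL, fun V G hX P hP => ?_⟩
  obtain ⟨t, s, R, hs1, -, hR, hRc, hRsum⟩ := h V G hX P hP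
  have hPpos : (0 : ℝ) < P.card := lt_of_lt_of_le hL hP
  have hs : (0 : ℝ) < s := lt_of_lt_of_le (by positivity) hs1
  have hRc' : (R.card : ℝ) = n * s := by exact_mod_cast hRc
  have hRpos : (0 : ℝ) < R.card := by rw [hRc']; positivity
  set R' := R.filter (fun x => ((nbrIn (side G t) x R).card : ℝ) ≤ 6 * s) with hR'
  have hbad : (R.card : ℝ) ≤ 2 * R'.card := by
    have h1 : ∑ x ∈ R.filter (fun x => ¬ ((nbrIn (side G t) x R).card : ℝ) ≤ 6 * s), (6 * s : ℝ) ≤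
        ∑ x ∈ R, ((nbrIn (side G t) x R).card : ℝ) := by
      refine le_trans (Finset.sum_le_sum (g := fun x => ((nbrIn (side G t) x R).card : ℝ)) ?_)
        (Finset.sum_le_sum_of_subset_of_nonneg (Finset.filter_subset _ _) fun _ _ _ => by positivity)
      intro x hx
      exact (not_le.1 (Finset.mem_filter.1 hx).2).le
    rw [Finset.sum_const, nsmul_eq_mul] at h1
    have h2 : ∑ x ∈ R, ((nbrIn (side G t) x R).card : ℝ) ≤ 3 * n * s ^ 2 := by exact_mod_cast hRsum
    have h3 := Finset.card_filter_add_card_filter_not (s := R)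
      (fun x => ((nbrIn (side G t) x R).card : ℝ) ≤ 6 * s)
    have h3' : (R'.card : ℝ) +
      (R.filter (fun x => ¬ ((nbrIn (side G t) x R).card : ℝ) ≤ 6 * s)).card = R.card := by
      rw [← h3, ← hR', Nat.cast_add]
    have h4 : ((R.filter (fun x => ¬ ((nbrIn (side G t) x R).card : ℝ) ≤ 6 * s)).card : ℝ) * 2 ≤
        n * s := by
      have : (((R.filter (fun x => ¬ ((nbrIn (side G t) x R).card : ℝ) ≤ 6 * s)).card : ℝ) * 2) *
        (3 * s) ≤ (n * s) * (3 * s) := by nlinarith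
      exact le_of_mul_le_mul_right this (by positivity)
    linarith
  have hR'sub : R' ⊆ R := Finset.filter_subset _ _
  have hn1 : (1 : ℝ) ≤ n := by exact_mod_cast (show 0 < n by exact_mod_cast hn0)
  refine ⟨t, R', hR'sub.trans hR, ?_, ?_, ?_⟩
  · have : (0 : ℝ) < R'.card := by linarith
    exact Finset.card_pos.1 (by exact_mod_cast this)
  · nlinarith
  · intro x hx
    have h1 := (Finset.mem_filter.1 hx).2
    have h2 : ((nbrIn (side G t) x R').card : ℝ) ≤ (nbrIn (side G t) x R).card := by
      exact_mod_cast Finset.card_le_card (nbrIn_mono _ _ hR'sub)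
    rw [div_lt_iff₀ hε] at hn
    nlinarith

/-- Distribute items of weight at most `w` into `N` bins of nearly equal total weight. -/
lemma exists_balanced_coloring {ι : Type} (s : Finset ι) (f : ι → ℝ) (w : ℝ) (hf : ∀ i, 0 ≤ f i)
    (hw : ∀ i, f i ≤ w) (hw0 : 0 ≤ w) (N : ℕ) [NeZero N] :
    ∃ col : ι → Fin N, ∀ b, ∑ i ∈ s with col i = b, f i ≤ (∑ i ∈ s, f i) / N + w := by
  classical
  have hN : (0 : ℝ) < N := by exact_mod_cast NeZero.pos N
  induction s using Finset.induction_on with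
  | empty => exact ⟨fun _ => 0, by simpa⟩
  | insert a s ha ih =>
    obtain ⟨col, hcol⟩ := ih
    obtain ⟨b0, -, hb0⟩ : ∃ b ∈ (Finset.univ : Finset (Fin N)),
        ∑ i ∈ s with col i = b, f i ≤ (∑ i ∈ s, f i) / N := by
      apply Finset.exists_le_of_sum_le ⟨0, by simp⟩
      rw [Finset.sum_fiberwise]
      simp
      field_simp
      exact le_rfl
    refine ⟨Function.update col a b0, fun b => ?_⟩
    have hsame : ∑ i ∈ s with Function.update col a b0 i = b, f i = ∑ i ∈ s with col i = b, f i := by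
      apply Finset.sum_congr _ fun _ _ => rfl
      apply Finset.filter_congr
      intro i hi
      rw [Function.update_of_ne (by rintro rfl; exact ha hi)]
    rw [Finset.filter_insert, Finset.sum_insert ha]
    have h1 : (∑ i ∈ s, f i) / N ≤ (f a + ∑ i ∈ s, f i) / N := by
      gcongr
      linarith [hf a]
    split_ifs with h
    · rw [Finset.sum_insert (by simp [ha]), hsame]
      rw [Function.update_self] at h
      subst h
      linarith [hw a]
    · rw [hsame]
      linarith [hcol b]

/-- The vertices of `P` with label `l`. -/
noncomputable def labelClass {V : Type} (c : V → V) (l : V) (P : Finset V) : Finset V :=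
  open Classical in P.filter (fun u => c u = l)

@[simp] lemma mem_labelClass {V : Type} {c : V → V} {l u : V} {P : Finset V} :
    u ∈ labelClass c l P ↔ u ∈ P ∧ c u = l := by
  simp [labelClass]

lemma labelClass_mono {V : Type} (c : V → V) (l : V) {P Q : Finset V} (h : Q ⊆ P) :
    labelClass c l Q ⊆ labelClass c l P := by
  intro u hu
  rw [mem_labelClass] at hu ⊢
  exact ⟨h hu.1, hu.2⟩

/-- A popular part of `A` whose labels occur only on a small part of `P`. -/
lemma exists_subset_avoiding_label {V : Type} (P A : Finset V) (c : V → V) (w : ℝ) (hw0 : 0 ≤ w)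
    (hw : ∀ l, ((labelClass c l P).card : ℝ) ≤ w) (N : ℕ) (hN : 0 < N) :
    ∃ A' ⊆ A, A.card ≤ N * A'.card ∧ ∃ B ⊆ P, (B.card : ℝ) ≤ P.card / N + w ∧
      ∀ a ∈ A', ∀ u ∈ P, u ∉ B → c a ≠ c u := by
  classical
  have : NeZero N := ⟨hN.ne'⟩
  obtain ⟨col, hcol⟩ := exists_balanced_coloring (P.image c)
    (fun l => ((labelClass c l P).card : ℝ)) w (fun _ => by positivity)
    hw hw0 N
  have hN' : (0 : ℝ) < N := by exact_mod_cast hN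
  obtain ⟨b, -, hb⟩ := Finset.exists_le_card_fiber_of_nsmul_le_card_of_maps_to
    (s := A) (t := Finset.univ) (f := fun a => col (c a)) (b := (A.card : ℝ) / N) (by simp)
    ⟨0, by simp⟩ (by
      rw [Finset.card_univ, Fintype.card_fin, nsmul_eq_mul]
      field_simp
      exact le_rfl)
  refine ⟨A.filter (fun a => col (c a) = b), Finset.filter_subset _ _, ?_,
    P.filter (fun u => col (c u) = b), Finset.filter_subset _ _, ?_, ?_⟩
  · rw [div_le_iff₀ hN'] at hb
    rw [mul_comm]
    exact_mod_cast hb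
  · refine le_trans (le_of_eq ?_) ((hcol b).trans (le_of_eq ?_))
    · rw [Finset.card_eq_sum_card_fiberwise (f := c) (t := (P.image c).filter (fun l => col l = b))]
      · push_cast
        apply Finset.sum_congr rfl
        intro l hl
        congr 2
        ext u
        have := (Finset.mem_filter.1 hl).2
        simp only [Finset.mem_filter, mem_labelClass]
        constructor
        · exact fun h => ⟨h.1.1, h.2⟩
        · rintro ⟨h, rfl⟩
          exact ⟨⟨h, this⟩, rfl⟩
      · intro u hu
        simp only [Finset.coe_filter, Set.mem_ofPred_eq] at hu
        simp only [Finset.coe_filter, Set.mem_ofPred_eq, Finset.mem_image]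
        exact ⟨⟨u, hu.1, rfl⟩, hu.2⟩
    · congr 2
      rw [← Nat.cast_sum, Finset.card_eq_sum_card_image c P]
      congr 1
  · intro a ha u hu huB hau
    apply huB
    rw [Finset.mem_filter] at ha ⊢
    exact ⟨hu, hau ▸ ha.2⟩

lemma exists_subset_avoiding_labels {V : Type} (P : Finset V) (w : ℝ) (hw0 : 0 ≤ w) (N : ℕ)
    (hN : 0 < N) (cs : List (V → V)) (A : Finset V)
    (hw : ∀ c ∈ cs, ∀ l, ((labelClass c l P).card : ℝ) ≤ w) :
    ∃ A' ⊆ A, A.card ≤ N ^ cs.length * A'.card ∧ ∃ B ⊆ P,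
      (B.card : ℝ) ≤ cs.length * (P.card / N + w) ∧
      ∀ c ∈ cs, ∀ a ∈ A', ∀ u ∈ P, u ∉ B → c a ≠ c u := by
  classical
  induction cs generalizing A with
  | nil => exact ⟨A, subset_rfl, by simp, ∅, by simp, by simp, by simp⟩
  | cons c cs ih =>
    obtain ⟨A₁, hA₁, hc₁, B₁, hB₁, hBc₁, h₁⟩ := exists_subset_avoiding_label P A c w hw0
      (hw c (by simp)) N hN
    obtain ⟨A₂, hA₂, hc₂, B₂, hB₂, hBc₂, h₂⟩ := ih A₁ (fun c' hc' => hw c' (by simp [hc']))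
    refine ⟨A₂, hA₂.trans hA₁, ?_, B₁ ∪ B₂, Finset.union_subset hB₁ hB₂, ?_, ?_⟩
    · calc A.card ≤ N * A₁.card := hc₁
        _ ≤ N * (N ^ cs.length * A₂.card) := by gcongr
        _ = _ := by rw [List.length_cons]; ring
    · have : ((B₁ ∪ B₂).card : ℝ) ≤ B₁.card + B₂.card := by exact_mod_cast Finset.card_union_le _ _
      rw [List.length_cons]
      push_cast
      linarith
    · intro c' hc' a ha u hu hnu
      rw [Finset.mem_union, not_or] at hnu
      rcases List.mem_cons.1 hc' with rfl | hc'
      · exact h₁ a (hA₂ ha) u hu hnu.1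
      · exact h₂ c' hc' a ha u hu hnu.2

/-- A stable set `A` of neighbours of `v` whose neighbourhoods have size at most `D` and cover the
set `T` of non-neighbours of `v`, with no label of `cs` shared between `A` and `T`. -/
structure StarCover {V : Type} (G : SimpleGraph V) (P : Finset V) (cs : List (V → V)) (v : V)
    (A T : Finset V) (D : ℕ) : Prop where
  subset_left : A ⊆ P
  subset_right : T ⊆ P
  nonempty : T.Nonempty
  pos : 1 ≤ D
  adj : ∀ a ∈ A, G.Adj v a
  stable : ∀ a ∈ A, ∀ b ∈ A, ¬ G.Adj a b
  nonadj : ∀ u ∈ T, ¬ G.Adj v u ∧ v ≠ u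
  cover : ∀ u ∈ T, ∃ a ∈ A, G.Adj a u
  degree : ∀ a ∈ A, (nbrIn G a T).card ≤ D
  label : ∀ c ∈ cs, ∀ a ∈ A, ∀ u ∈ T, c a ≠ c u

lemma StarCover.mono {V : Type} {G : SimpleGraph V} {P U : Finset V} {cs cs' : List (V → V)} {v : V}
    {A T : Finset V} {D : ℕ} (h : StarCover G U cs' v A T D) (hU : U ⊆ P) (hcs : cs ⊆ cs') :
    StarCover G P cs v A T D :=
  { h with
    subset_left := h.subset_left.trans hU
    subset_right := h.subset_right.trans hU
    label := fun c hc => h.label c (hcs hc) }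

/-- A critical set of at least two vertices spans an edge. -/
lemma Critical.exists_adj {V : Type} {G : SimpleGraph V} {ρ : ℝ} {P : Finset V}
    (h : Critical G ρ 0 P) (hρ : ρ < 1) (hP : 2 ≤ P.card) : ∃ x ∈ P, ∃ y ∈ P, G.Adj x y := by
  by_contra! hno
  have hcl : Gᶜ.IsClique (P : Set V) := fun x hx y hy hxy =>
    (compl_adj _ _ _).2 ⟨hxy, hno x hx y hy⟩
  have hne : P.Nonempty := Finset.card_pos.1 (by omega)
  have h1 := IsClique.card_le_cliqueNumIn subset_rfl hcl
  have h2 : P.card ≤ homProd G P := by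
    have := one_le_cliqueNumIn G hne
    unfold homProd
    nlinarith
  have h3 : logCard P ≤ logHom G P :=
    Real.log_le_log (by exact_mod_cast hne.card_pos) (by exact_mod_cast h2)
  obtain ⟨x, hx⟩ := hne
  have h4 := h {x} (by simpa) (by simp)
  simp only [logCard, logHom, homProd_singleton, Finset.card_singleton, Nat.cast_one,
    Real.log_one] at h4 h3
  have h5 : 0 < Real.log (P.card : ℝ) := Real.log_pos (by exact_mod_cast hP)
  nlinarith

lemma Critical.rpow_mul_le {V : Type} {G : SimpleGraph V} {ρ : ℝ} {P Q : Finset V}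
    (h : Critical G ρ 0 P) (hQ : Q ⊆ P) (hne : Q.Nonempty) :
    ((Q.card : ℝ) / P.card) ^ ρ * homProd G P ≤ homProd G Q := by
  have hP : P.Nonempty := hne.mono hQ
  have hQc : (0 : ℝ) < Q.card := by exact_mod_cast hne.card_pos
  have hPc : (0 : ℝ) < P.card := by exact_mod_cast hP.card_pos
  have hgP : (0 : ℝ) < homProd G P := by exact_mod_cast one_le_homProd G hP
  have hgQ : (0 : ℝ) < homProd G Q := by exact_mod_cast one_le_homProd G hne
  rw [← Real.log_le_log_iff (by positivity) hgQ, Real.log_mul (by positivity) (by positivity),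
    Real.log_rpow (by positivity), Real.log_div hQc.ne' hPc.ne']
  have := h Q hQ hne
  simp only [logCard, logHom] at this
  linarith

set_option maxHeartbeats 1000000 in
lemma exists_starCover_of_critical (J : ℕ) (μ : ℝ) (hμ : 0 < μ) (hμ1 : μ ≤ 1) :
    ∃ ρ Y₀ : ℝ, 0 < ρ ∧ ρ < 1 ∧ 0 < Y₀ ∧ ∀ (V : Type) (G : SimpleGraph V) (P : Finset V)
      (cs : List (V → V)) (D : ℕ) (v : V), Critical G ρ 0 P → cs.length ≤ J → 1 ≤ D →
      (∀ x ∈ P, (nbrIn G x P).card ≤ D) → v ∈ P → (nbrIn G v P).card = D →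
      Y₀ ≤ logCard P - Real.log D →
      (∀ c ∈ cs, ∀ l, Real.log (labelClass c l P).card + μ * (logCard P - Real.log D) ≤
        logCard P) →
      ∃ A T, StarCover G P cs v A T D ∧
        logCard P ≤ logCard T + μ * (logCard P - Real.log D) := by
  classical
  refine ⟨μ / (8 * (1 + J)), 8 * Real.log (3 + 3 * J) / μ, by positivity, ?_, ?_, ?_⟩
  · rw [div_lt_one (by positivity)]
    have : (0 : ℝ) ≤ J := by positivity
    linarith
  · have : 0 < Real.log (3 + 3 * (J : ℝ)) := Real.log_pos (by
      have : (0 : ℝ) ≤ J := by positivity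
      linarith)
    positivity
  intro V G P cs D v hcrit hJ hD hdeg hv hvD hY hcl
  set ρ := μ / (8 * (1 + J)) with hρ
  have hρpos : 0 < ρ := by positivity
  set Y := logCard P - Real.log D with hYdef
  have hJ0 : (0 : ℝ) ≤ J := by positivity
  have hDpos : (0 : ℝ) < D := by exact_mod_cast hD
  have hPpos : (0 : ℝ) < P.card := by exact_mod_cast Finset.card_pos.2 ⟨v, hv⟩
  set n := (P.card : ℝ) with hn
  have hlog3 : 0 < Real.log (3 + 3 * (J : ℝ)) := Real.log_pos (by linarith)
  have hYpos : 0 < Y := lt_of_lt_of_le (by positivity) hY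
  -- basic quantities
  have hDn : (D : ℝ) = n * Real.exp (-Y) := by
    rw [hYdef, neg_sub, Real.exp_sub, Real.exp_log hDpos, logCard, Real.exp_log hPpos]
    field_simp
  set x := Real.exp (-(μ * Y / 8)) with hx
  have hxpos : 0 < x := Real.exp_pos _
  have hx1 : x * (3 + 3 * J) ≤ 1 := by
    rw [div_le_iff₀ hμ] at hY
    have : x ≤ Real.exp (-Real.log (3 + 3 * J)) := Real.exp_le_exp.2 (by linarith)
    rw [Real.exp_neg, Real.exp_log (by positivity)] at this
    calc x * (3 + 3 * J) ≤ (3 + 3 * (J : ℝ))⁻¹ * (3 + 3 * J) := by gcongr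
      _ = 1 := inv_mul_cancel₀ (by positivity)
  have hμY : μ * Y ≤ Y := by
    have := mul_le_mul_of_nonneg_right hμ1 hYpos.le
    linarith
  have hxle : x ≤ 1 := by
    have := mul_nonneg hxpos.le hJ0
    linarith
  have hx4 : x ^ 4 = Real.exp (-(μ * Y / 2)) := by
    rw [hx, ← Real.exp_nat_mul]
    congr 1
    push_cast
    ring
  have hx8 : x ^ 8 = Real.exp (-(μ * Y)) := by
    rw [hx, ← Real.exp_nat_mul]
    congr 1
    push_cast
    ring
  have hx84 : x ^ 8 ≤ x ^ 4 := pow_le_pow_of_le_one hxpos.le hxle (by norm_num)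
  clear_value ρ Y n x
  -- labels
  set N := ⌊Real.exp (μ * Y / 2)⌋₊ with hNdef
  have hexp1 : 1 ≤ Real.exp (μ * Y / 2) := Real.one_le_exp (by positivity)
  have hN1 : 1 ≤ N := (Nat.one_le_floor_iff _).2 hexp1
  have hNr : (1 : ℝ) ≤ N := by exact_mod_cast hN1
  have hNle : (N : ℝ) ≤ Real.exp (μ * Y / 2) := Nat.floor_le (by positivity)
  have hNge : Real.exp (μ * Y / 2) ≤ 2 * N := by
    have := Nat.lt_floor_add_one (Real.exp (μ * Y / 2))
    linarith
  clear_value N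
  have hinv : x ^ 4 * Real.exp (μ * Y / 2) = 1 := by
    rw [hx4, ← Real.exp_add]
    simp
  have hnN : n / N ≤ 2 * n * x ^ 4 := by
    rw [div_le_iff₀ (by positivity)]
    have h1 : 1 ≤ x ^ 4 * (2 * N) := by
      rw [← hinv]
      gcongr
    have := mul_le_mul_of_nonneg_left h1 hPpos.le
    linarith
  obtain ⟨A, hA, hAc, B, hBP, hBc, hlab⟩ := exists_subset_avoiding_labels P (n * x ^ 8)
    (by positivity) N hN1 cs (nbrIn G v P) (by
      intro c hc l
      rcases Finset.eq_empty_or_nonempty (labelClass c l P) with h | h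
      · rw [h]
        simp only [Finset.card_empty, Nat.cast_zero]
        positivity
      · have h1 := hcl c hc l
        have h2 : (0 : ℝ) < (labelClass c l P).card := by exact_mod_cast h.card_pos
        rw [← Real.log_le_log_iff h2 (by positivity), Real.log_mul hPpos.ne' (by positivity), hx8,
          Real.log_exp]
        simp only [logCard, ← hn] at h1
        linarith)
  rw [hvD] at hAc
  rw [← hn] at hBc
  have hBc' : (B.card : ℝ) ≤ J * (3 * n * x ^ 4) := by
    refine hBc.trans ?_
    have h1 : n / N + n * x ^ 8 ≤ 3 * n * x ^ 4 := by
      have := mul_le_mul_of_nonneg_left hx84 hPpos.le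
      linarith
    have h2 : (cs.length : ℝ) ≤ J := by exact_mod_cast hJ
    exact mul_le_mul h2 h1 (by positivity) hJ0
  have hAne : A.Nonempty := by
    rw [← Finset.card_pos]
    by_contra h
    have : A.card = 0 := by omega
    rw [this] at hAc
    omega
  have hAP : A ⊆ P := hA.trans (nbrIn_subset _ _ _)
  have hApos : (0 : ℝ) < A.card := by exact_mod_cast hAne.card_pos
  have hAcr : (D : ℝ) ≤ (N : ℝ) ^ cs.length * A.card := by exact_mod_cast hAc
  obtain ⟨q, hq⟩ : ∃ q : ℝ, q = A.card := ⟨_, rfl⟩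
  rw [← hq] at hApos hAcr
  have hAfrac : x ≤ (q / n) ^ ρ := by
    rw [← Real.log_le_log_iff hxpos (by positivity), Real.log_rpow (by positivity),
      Real.log_div hApos.ne' hPpos.ne', hx, Real.log_exp]
    have h1 : Real.log D ≤ J * (μ * Y / 2) + Real.log q := by
      have h2 : (D : ℝ) ≤ Real.exp (μ * Y / 2) ^ J * q := by
        calc (D : ℝ) ≤ (N : ℝ) ^ cs.length * q := hAcr
          _ ≤ (N : ℝ) ^ J * q := by gcongr
          _ ≤ _ := by gcongr
      have h3 := Real.log_le_log hDpos h2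
      rw [Real.log_mul (by positivity) hApos.ne', ← Real.exp_nat_mul, Real.log_exp] at h3
      exact h3
    have h4 : Real.log n = Y + Real.log D := by rw [hYdef, logCard, ← hn]; ring
    have h5 : Real.log n - Real.log q ≤ Y * (1 + J) := by
      have : J * (μ * Y / 2) ≤ J * Y := by
        gcongr
        linarith
      linarith
    have h6 : ρ * (Y * (1 + J)) = μ * Y / 8 := by
      rw [hρ]
      field_simp
    have h7 := mul_le_mul_of_nonneg_left h5 hρpos.le
    linarith
  -- a maximum stable set of `A`
  obtain ⟨Z, hZA, hZ, hZc⟩ := exists_isClique_card_eq Gᶜ A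
  set U := P.filter (fun u => u ∉ Z ∧ ∀ z ∈ Z, ¬ G.Adj z u) with hU
  have hUP : U ⊆ P := Finset.filter_subset _ _
  have hUmem : ∀ u, u ∈ U ↔ u ∈ P ∧ u ∉ Z ∧ ∀ z ∈ Z, ¬ G.Adj z u := fun u => Finset.mem_filter
  clear_value U
  have hadd := homProd_add_le G hAP hUP hZA hZ hZc (by
    intro z hz b hb
    have := ((hUmem b).1 hb).2
    exact ⟨by rintro rfl; exact this.1 hz, this.2 z hz⟩)
  have hgpos : (0 : ℝ) < homProd G P := by exact_mod_cast one_le_homProd G ⟨v, hv⟩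
  have hUc : (U.card : ℝ) ≤ n * (1 - x) := by
    have h1 := hcrit.rpow_mul_le hAP hAne
    rw [← hq, ← hn] at h1
    have h2 : x * homProd G P ≤ homProd G A :=
      le_trans (mul_le_mul_of_nonneg_right hAfrac hgpos.le) h1
    have h3 : (U.card : ℝ) / n * homProd G P ≤ homProd G U := by
      rcases Finset.eq_empty_or_nonempty U with h | h
      · rw [h]
        simp
      · refine le_trans ?_ (hcrit.rpow_mul_le hUP h)
        have hle : (U.card : ℝ) / n ≤ 1 := by
          rw [div_le_one hPpos, hn]
          exact_mod_cast Finset.card_le_card hUP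
        rw [← hn]
        refine mul_le_mul_of_nonneg_right (Real.self_le_rpow_of_le_one
          (div_nonneg (Nat.cast_nonneg _) hPpos.le) hle ?_) hgpos.le
        rw [hρ, div_le_one (by positivity)]
        linarith
    have h4 : (homProd G A : ℝ) + homProd G U ≤ homProd G P := by exact_mod_cast hadd
    have h5 : ((U.card : ℝ) / n + x) * homProd G P ≤ 1 * homProd G P := by linarith
    have h6 := le_of_mul_le_mul_right h5 hgpos
    have h7 : (U.card : ℝ) / n ≤ 1 - x := by linarith
    rw [div_le_iff₀ hPpos] at h7
    linarith
  set T := P \ (U ∪ (nbrIn G v P ∪ ({v} ∪ B))) with hT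
  have hTc : n * x ^ 8 ≤ T.card := by
    have h1 : P.card ≤ T.card + (U.card + (D + (1 + B.card))) := by
      have h2 := Finset.le_card_sdiff (U ∪ (nbrIn G v P ∪ ({v} ∪ B))) P
      have h3 := Finset.card_union_le U (nbrIn G v P ∪ ({v} ∪ B))
      have h4 := Finset.card_union_le (nbrIn G v P) ({v} ∪ B)
      have h5 := Finset.card_union_le {v} B
      rw [Finset.card_singleton] at h5
      rw [← hT] at h2
      omega
    have h1' : n ≤ T.card + (U.card + (D + (1 + B.card))) := by
      rw [hn]
      exact_mod_cast h1
    have h6 : (D : ℝ) ≤ n * x ^ 4 := by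
      rw [hDn, hx4]
      gcongr
      linarith
    have h7 : (1 : ℝ) ≤ D := by exact_mod_cast hD
    have h8 : x ^ 4 * (3 + 3 * J) ≤ x := by
      have h9 : x ^ 3 ≤ 1 := pow_le_one₀ hxpos.le hxle
      have h10 : x ^ 4 * (3 + 3 * J) = x ^ 3 * (x * (3 + 3 * J)) := by ring
      have h11 : x ^ 3 ≤ x := by
        calc x ^ 3 ≤ x ^ 1 := pow_le_pow_of_le_one hxpos.le hxle (by norm_num)
          _ = x := pow_one x
      rw [h10]
      calc x ^ 3 * (x * (3 + 3 * J)) ≤ x ^ 3 * 1 := by gcongr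
        _ ≤ x := by linarith
    have h12 : n * (x ^ 4 * (3 + 3 * J)) ≤ n * x := by gcongr
    have h13 : n * x ^ 8 ≤ n * x ^ 4 := by gcongr
    linarith
  have hTpos : (0 : ℝ) < T.card := lt_of_lt_of_le (by positivity) hTc
  have hTmem : ∀ u ∈ T, u ∈ P ∧ u ∉ U ∧ u ∉ nbrIn G v P ∧ u ≠ v ∧ u ∉ B := by
    intro u hu
    simp only [hT, Finset.mem_sdiff, Finset.mem_union, not_or, Finset.mem_singleton] at hu
    exact ⟨hu.1, hu.2.1, hu.2.2.1, hu.2.2.2.1, hu.2.2.2.2⟩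
  have hTP : T ⊆ P := Finset.sdiff_subset
  refine ⟨Z, T, ?_, ?_⟩
  · refine ⟨hZA.trans hAP, hTP, Finset.card_pos.1 (by exact_mod_cast hTpos), hD, ?_, ?_, ?_, ?_,
      ?_, ?_⟩
    · intro a ha
      exact (mem_nbrIn.1 (hA (hZA ha))).2
    · intro a ha b hb hab
      exact ((compl_adj _ _ _).1 (hZ ha hb hab.ne)).2 hab
    · intro u hu
      obtain ⟨hP, -, hnv, hne, -⟩ := hTmem u hu
      exact ⟨fun h => hnv (mem_nbrIn.2 ⟨hP, h⟩), hne.symm⟩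
    · intro u hu
      obtain ⟨hP, hnU, hnv, -, -⟩ := hTmem u hu
      by_contra! hno
      exact hnU ((hUmem u).2 ⟨hP, fun hz => hnv (hA (hZA hz)), hno⟩)
    · intro a ha
      exact (Finset.card_le_card (nbrIn_mono _ _ hTP)).trans (hdeg a (hAP (hZA ha)))
    · intro c hc a ha u hu
      obtain ⟨hP, -, -, -, hnB⟩ := hTmem u hu
      exact hlab c hc a (hZA ha) u hP hnB
  · have h1 := Real.log_le_log (by positivity) hTc
    rw [Real.log_mul hPpos.ne' (by positivity), hx8, Real.log_exp] at h1
    simp only [logCard, ← hn]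
    linarith

/-- A vertex `v` joined to a stable set `S`, together with non-neighbours `U` of `v` each having a
unique neighbour `l u` in `S`; no label of `cs` is shared between `S` and `U`. -/
structure Comb {V : Type} (G : SimpleGraph V) (P : Finset V) (cs : List (V → V)) (v : V)
    (S U : Finset V) (l : V → V) : Prop where
  subset_left : S ⊆ P
  subset_right : U ⊆ P
  adj_center : ∀ s ∈ S, G.Adj v s
  stable : ∀ a ∈ S, ∀ b ∈ S, ¬ G.Adj a b
  nonadj : ∀ u ∈ U, ¬ G.Adj v u ∧ v ≠ u
  mem : ∀ u ∈ U, l u ∈ S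
  adj : ∀ u ∈ U, G.Adj (l u) u
  unique : ∀ u ∈ U, ∀ s ∈ S, s ≠ l u → ¬ G.Adj s u
  label : ∀ c ∈ cs, ∀ s ∈ S, ∀ u ∈ U, c s ≠ c u

lemma StarCover.exists_comb {V : Type} {G : SimpleGraph V} {P : Finset V} {cs : List (V → V)} {v : V}
    {A T : Finset V} {D : ℕ} (h : StarCover G P cs v A T D) :
    ∃ (S U T' : Finset V) (l : V → V), U ⊆ T ∧ T' ⊆ T ∧ T.card ≤ T'.card + S.card * D ∧
      (T'.Nonempty → StarCover G P cs v A T' (3 * D / 4)) ∧ S.card * D ≤ 2 * U.card ∧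
      Comb G P cs v S U l ∧ ∀ x, (labelClass l x U).card ≤ D := by
  classical
  set N : Finset V → Finset V := fun S => T.filter (fun u => ∃ s ∈ S, G.Adj s u) with hN
  obtain ⟨S, hS, hmax⟩ := Finset.exists_max_image
    (A.powerset.filter (fun S => 3 * (S.card * D) ≤ 4 * (N S).card)) Finset.card
    ⟨∅, by simp⟩
  simp only [Finset.mem_filter, Finset.mem_powerset] at hS hmax
  obtain ⟨hSA, hSN⟩ := hS
  have hdegsum : ∑ s ∈ S, (nbrIn G s T).card ≤ S.card * D := by
    rw [← smul_eq_mul]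
    exact Finset.sum_le_card_nsmul _ _ _ fun s hs => h.degree s (hSA hs)
  have hNsub : N S ⊆ S.biUnion (fun s => nbrIn G s T) := by
    intro u hu
    simp only [hN, Finset.mem_filter] at hu
    obtain ⟨hu, s, hs, hsu⟩ := hu
    exact Finset.mem_biUnion.2 ⟨s, hs, mem_nbrIn.2 ⟨hu, hsu⟩⟩
  have hNle : (N S).card ≤ S.card * D :=
    (Finset.card_le_card hNsub).trans (Finset.card_biUnion_le.trans hdegsum)
  set U := T.filter (fun u => (nbrIn G u S).card = 1) with hU
  have hUmem : ∀ u ∈ U, ∃ s ∈ S, G.Adj s u ∧ ∀ s' ∈ S, s' ≠ s → ¬ G.Adj s' u := by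
    intro u hu
    obtain ⟨s, hs⟩ := Finset.card_eq_one.1 (Finset.mem_filter.1 hu).2
    have hs' : s ∈ nbrIn G u S := by simp [hs]
    rw [mem_nbrIn] at hs'
    refine ⟨s, hs'.1, hs'.2.symm, fun s' hs'' hne hadj => hne ?_⟩
    have : s' ∈ nbrIn G u S := mem_nbrIn.2 ⟨hs'', hadj.symm⟩
    simpa [hs] using this
  have : Nonempty V := ⟨v⟩
  choose! l hl using hUmem
  have hUT : U ⊆ T := Finset.filter_subset _ _
  have hUN : U ⊆ N S := by
    intro u hu
    obtain ⟨h1, h2, -⟩ := hl u hu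
    exact Finset.mem_filter.2 ⟨hUT hu, l u, h1, h2⟩
  refine ⟨S, U, T \ N S, l, hUT, Finset.sdiff_subset, ?_, ?_, ?_, ?_, ?_⟩
  · have := Finset.le_card_sdiff (N S) T
    omega
  · intro hne
    have hdeg : ∀ a ∈ A, 4 * (nbrIn G a (T \ N S)).card ≤ 3 * D := by
      intro a ha
      by_cases haS : a ∈ S
      · have : nbrIn G a (T \ N S) = ∅ := by
          rw [Finset.eq_empty_iff_forall_notMem]
          intro u hu
          rw [mem_nbrIn, Finset.mem_sdiff] at hu
          exact hu.1.2 (Finset.mem_filter.2 ⟨hu.1.1, a, haS, hu.2⟩)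
        simp [this]
      · by_contra! hlt
        have hins : N (insert a S) = N S ∪ nbrIn G a (T \ N S) := by
          ext u
          simp only [hN, Finset.mem_filter, Finset.mem_insert, exists_eq_or_imp, Finset.mem_union,
            mem_nbrIn, Finset.mem_sdiff]
          by_cases hex : ∃ s ∈ S, G.Adj s u <;> simp only [hex] <;> tauto
        have hdisj : Disjoint (N S) (nbrIn G a (T \ N S)) := by
          rw [Finset.disjoint_left]
          intro u hu hu'
          rw [mem_nbrIn, Finset.mem_sdiff] at hu'
          exact hu'.1.2 hu
        have hc := Finset.card_union_of_disjoint hdisj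
        rw [← hins] at hc
        have hci := Finset.card_insert_of_notMem haS
        have := hmax (insert a S) ⟨Finset.insert_subset ha hSA, by
          rw [hci, hc]
          linarith⟩
        omega
    refine { h with
      subset_right := Finset.sdiff_subset.trans h.subset_right
      nonempty := hne
      pos := ?_
      nonadj := fun u hu => h.nonadj u (Finset.sdiff_subset hu)
      cover := fun u hu => h.cover u (Finset.sdiff_subset hu)
      degree := fun a ha => ?_
      label := fun c hc a ha u hu => h.label c hc a ha u (Finset.sdiff_subset hu) }
    · obtain ⟨u, hu⟩ := hne
      obtain ⟨a, ha, hau⟩ := h.cover u (Finset.sdiff_subset hu)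
      have h1 := hdeg a ha
      have h2 : 0 < (nbrIn G a (T \ N S)).card := Finset.card_pos.2 ⟨u, mem_nbrIn.2 ⟨hu, hau⟩⟩
      omega
    · have := hdeg a ha
      omega
  · have h1 : ∑ u ∈ N S, (nbrIn G u S).card ≤ S.card * D := by
      refine le_trans ?_ hdegsum
      rw [sum_card_nbrIn_comm]
      exact Finset.sum_le_sum fun s _ =>
        Finset.card_le_card (nbrIn_mono _ _ (Finset.filter_subset _ _))
    have h2 : ∑ u ∈ N S, 2 ≤ ∑ u ∈ N S, ((nbrIn G u S).card + if u ∈ U then 1 else 0) := by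
      refine Finset.sum_le_sum fun u hu => ?_
      obtain ⟨huT, s, hs, hsu⟩ := Finset.mem_filter.1 hu
      have h3 : 0 < (nbrIn G u S).card := Finset.card_pos.2 ⟨s, mem_nbrIn.2 ⟨hs, hsu.symm⟩⟩
      split_ifs with h4
      · omega
      · have : (nbrIn G u S).card ≠ 1 := fun h5 => h4 (Finset.mem_filter.2 ⟨huT, h5⟩)
        omega
    rw [Finset.sum_add_distrib, Finset.sum_const, smul_eq_mul, Finset.sum_ite_mem,
      Finset.inter_eq_right.2 hUN, Finset.sum_const, smul_eq_mul] at h2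
    omega
  · exact ⟨hSA.trans h.subset_left, hUT.trans h.subset_right, fun s hs => h.adj s (hSA hs),
      fun a ha b hb => h.stable a (hSA ha) b (hSA hb), fun u hu => h.nonadj u (hUT hu),
      fun u hu => (hl u hu).1, fun u hu => (hl u hu).2.1, fun u hu => (hl u hu).2.2,
      fun c hc s hs u hu => h.label c hc s (hSA hs) u (hUT hu)⟩
  · intro x
    rcases Finset.eq_empty_or_nonempty (labelClass l x U) with he | ⟨u, hu⟩
    · simp [he]
    · rw [mem_labelClass] at hu
      obtain ⟨hu, rfl⟩ := hu
      refine (Finset.card_le_card ?_).trans (h.degree (l u) (hSA (hl u hu).1))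
      intro w hw
      rw [mem_labelClass] at hw
      exact mem_nbrIn.2 ⟨hUT hw.1, hw.2 ▸ (hl w hw.1).2.1⟩

/-- A family of properties of a graph, a set of its vertices and a list of labellings. -/
def Target := ∀ V : Type, SimpleGraph V → Finset V → List (V → V) → Prop

/-- `CombReducible N n 𝒯`: by passing `n` times to the teeth of a comb with at least `N` spine
vertices, while recording the labelling of the comb, the target `𝒯` becomes trivial. -/
def CombReducible (N : ℕ) : ℕ → Target → Prop
  | 0, 𝒯 => ∀ V G P cs, P.Nonempty → 𝒯 V G P cs
  | n + 1, 𝒯 =>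
    (∀ V G (U P : Finset V) cs cs', U ⊆ P → cs ⊆ cs' → 𝒯 V G U cs' → 𝒯 V G P cs) ∧
    ∃ 𝒯' : Target, CombReducible N n 𝒯' ∧ ∀ V G P cs v S U l, Comb G P cs v S U l → N ≤ S.card →
      𝒯' V G U (l :: cs) → 𝒯 V G P cs

/-- A copy of `H` restricted to `F`, inside `P`, on which all labellings are injective. -/
def forestTarget {W : Type*} (H : SimpleGraph W) (F : Finset W) : Target := fun V G P cs =>
  ∃ φ : W → V, (∀ w ∈ F, φ w ∈ P) ∧ (∀ w ∈ F, ∀ x ∈ F, φ w = φ x → w = x) ∧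
    (∀ w ∈ F, ∀ x ∈ F, G.Adj (φ w) (φ x) ↔ H.Adj w x) ∧
    ∀ c ∈ cs, ∀ w ∈ F, ∀ x ∈ F, c (φ w) = c (φ x) → w = x

/-- A copy of the star-expansion of `H`. -/
def starTarget {W : Type*} (H : SimpleGraph W) : Target := fun _ G _ _ =>
  Nonempty (starExpansion H ↪g G)

lemma SimpleGraph.IsAcyclic.exists_degree_le_one {W : Type*} [Finite W] [Nonempty W] {H : SimpleGraph W}
    (hH : H.IsAcyclic) : ∃ w, ∀ x y, H.Adj w x → H.Adj w y → x = y := by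
  classical
  have := Fintype.ofFinite W
  obtain ⟨n, ⟨u, v, p, hp, hn⟩, hmax⟩ : ∃ n, (∃ u v, ∃ p : H.Walk u v, p.IsPath ∧ p.length = n) ∧
      ∀ m, (∃ u v, ∃ p : H.Walk u v, p.IsPath ∧ p.length = m) → m ≤ n := by
    have hbdd : ∀ m, (∃ u v, ∃ p : H.Walk u v, p.IsPath ∧ p.length = m) → m ≤ Fintype.card W := by
      rintro m ⟨u, v, p, hp, rfl⟩
      exact hp.length_lt.le
    have hex : ∃ m, ∃ u v, ∃ p : H.Walk u v, p.IsPath ∧ p.length = m :=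
      ⟨0, Classical.arbitrary W, _, Walk.nil, by simp, rfl⟩
    obtain ⟨m, hm⟩ := hex
    exact ⟨_, Nat.findGreatest_spec (P := fun m => ∃ u v, ∃ p : H.Walk u v, p.IsPath ∧ p.length = m)
      (hbdd m hm) hm, fun k hk => Nat.le_findGreatest (hbdd k hk) hk⟩
  have key : ∀ x, H.Adj u x → x = p.snd := by
    intro x hx
    by_cases hxs : x ∈ p.support
    · exact hH.eq_snd_of_adj_start hp hx hxs
    · have := hmax (p.length + 1) ⟨x, v, Walk.cons hx.symm p, hp.cons hxs, by simp⟩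
      omega
  exact ⟨u, fun x y hx hy => (key x hx).trans (key y hy).symm⟩

lemma SimpleGraph.IsAcyclic.exists_mem_degree_le_one {W : Type*} {H : SimpleGraph W} (hH : H.IsAcyclic)
    {F : Finset W} (hF : F.Nonempty) :
    ∃ w ∈ F, ∀ x ∈ F, ∀ y ∈ F, H.Adj w x → H.Adj w y → x = y := by
  have : Nonempty (F : Set W) := hF.coe_sort
  obtain ⟨⟨w, hw⟩, h⟩ := (hH.induce (F : Set W)).exists_degree_le_one
  refine ⟨w, hw, fun x hx y hy hwx hwy => ?_⟩
  have := h ⟨x, hx⟩ ⟨y, hy⟩ hwx hwy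
  simpa using this

lemma combReducible_forestTarget {W : Type*} {H : SimpleGraph W} (hH : H.IsAcyclic) (N n : ℕ)
    (hn : n ≤ N) (F : Finset W) (hF : F.card = n) : CombReducible N n (forestTarget H F) := by
  classical
  induction n generalizing F with
  | zero =>
    rintro V G P cs ⟨x, -⟩
    rw [Finset.card_eq_zero] at hF
    exact ⟨fun _ => x, by simp [hF], by simp [hF], by simp [hF], by simp [hF]⟩
  | succ n ih =>
    refine ⟨?_, ?_⟩
    · rintro V G U P cs cs' hU hcs ⟨φ, h1, h2, h3, h4⟩
      exact ⟨φ, fun w hw => hU (h1 w hw), h2, h3, fun c hc => h4 c (hcs hc)⟩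
    obtain ⟨w, hw, hleaf⟩ := hH.exists_mem_degree_le_one
      (F := F) (Finset.card_pos.1 (by omega))
    have hcard : (F.erase w).card = n := by
      rw [Finset.card_erase_of_mem hw]
      omega
    refine ⟨forestTarget H (F.erase w), ih (by omega) _ hcard, ?_⟩
    rintro V G P cs v S U l hc hS ⟨φ, h1, h2, h3, h4⟩
    obtain ⟨s, hs, hsadj⟩ : ∃ s ∈ S, ∀ q ∈ F.erase w, G.Adj s (φ q) ↔ H.Adj w q := by
      by_cases hp : ∃ p ∈ F.erase w, H.Adj w p
      · obtain ⟨p, hp, hwp⟩ := hp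
        refine ⟨l (φ p), hc.mem _ (h1 p hp), fun q hq => ⟨fun hadj => ?_, fun hadj => ?_⟩⟩
        · by_contra hno
          have hpq : l (φ p) ≠ l (φ q) := by
            intro heq
            have := h4 l (by simp) p hp q hq heq
            exact hno (this ▸ hwp)
          exact hc.unique _ (h1 q hq) _ (hc.mem _ (h1 p hp)) hpq hadj
        · have := hleaf p (Finset.mem_of_mem_erase hp) q (Finset.mem_of_mem_erase hq) hwp hadj
          subst this
          exact hc.adj _ (h1 p hp)
      · push Not at hp
        have hlt : ((F.erase w).image (fun q => l (φ q))).card < S.card :=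
          lt_of_le_of_lt Finset.card_image_le (by omega)
        obtain ⟨s, hs, hns⟩ := Finset.exists_mem_notMem_of_card_lt_card hlt
        refine ⟨s, hs, fun q hq => ⟨fun hadj => ?_, fun hadj => (hp q hq hadj).elim⟩⟩
        refine (hc.unique _ (h1 q hq) s hs ?_ hadj).elim
        rintro rfl
        exact hns (Finset.mem_image.2 ⟨q, hq, rfl⟩)
    have hne : ∀ q ∈ F.erase w, s ≠ φ q := by
      intro q hq heq
      exact (hc.nonadj _ (h1 q hq)).1 (heq ▸ hc.adj_center s hs)
    have hlab : ∀ c ∈ cs, ∀ q ∈ F.erase w, c s ≠ c (φ q) := fun c hcc q hq =>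
      hc.label c hcc s hs _ (h1 q hq)
    have hself : Function.update φ w s w = s := Function.update_self _ _ _
    have hother : ∀ x, x ≠ w → Function.update φ w s x = φ x := fun x hx =>
      Function.update_of_ne hx _ _
    refine ⟨Function.update φ w s, ?_, ?_, ?_, ?_⟩
    · intro x hx
      by_cases hxw : x = w
      · subst hxw
        rw [hself]
        exact hc.subset_left hs
      · rw [hother x hxw]
        exact hc.subset_right (h1 x (Finset.mem_erase.2 ⟨hxw, hx⟩))
    · intro x hx y hy hxy
      by_cases hxw : x = w <;> by_cases hyw : y = w
      · rw [hxw, hyw]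
      · rw [hxw, hself, hother y hyw] at hxy
        exact (hne y (Finset.mem_erase.2 ⟨hyw, hy⟩) hxy).elim
      · rw [hyw, hself, hother x hxw] at hxy
        exact (hne x (Finset.mem_erase.2 ⟨hxw, hx⟩) hxy.symm).elim
      · rw [hother x hxw, hother y hyw] at hxy
        exact h2 x (Finset.mem_erase.2 ⟨hxw, hx⟩) y (Finset.mem_erase.2 ⟨hyw, hy⟩) hxy
    · intro x hx y hy
      by_cases hxw : x = w <;> by_cases hyw : y = w
      · rw [hxw, hyw]
        simp
      · rw [hxw, hself, hother y hyw]
        exact hsadj y (Finset.mem_erase.2 ⟨hyw, hy⟩)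
      · rw [hyw, hself, hother x hxw, G.adj_comm, H.adj_comm]
        exact hsadj x (Finset.mem_erase.2 ⟨hxw, hx⟩)
      · rw [hother x hxw, hother y hyw]
        exact h3 x (Finset.mem_erase.2 ⟨hxw, hx⟩) y (Finset.mem_erase.2 ⟨hyw, hy⟩)
    · intro c hcc x hx y hy hxy
      by_cases hxw : x = w <;> by_cases hyw : y = w
      · rw [hxw, hyw]
      · rw [hxw, hself, hother y hyw] at hxy
        exact (hlab c hcc y (Finset.mem_erase.2 ⟨hyw, hy⟩) hxy).elim
      · rw [hyw, hself, hother x hxw] at hxy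
        exact (hlab c hcc x (Finset.mem_erase.2 ⟨hxw, hx⟩) hxy.symm).elim
      · rw [hother x hxw, hother y hyw] at hxy
        exact h4 c (by simp [hcc]) x (Finset.mem_erase.2 ⟨hxw, hx⟩) y
          (Finset.mem_erase.2 ⟨hyw, hy⟩) hxy

lemma combReducible_starTarget {W : Type*} [Fintype W] {H : SimpleGraph W} (hH : H.IsAcyclic) :
    CombReducible (Fintype.card W) (Fintype.card W + 1) (starTarget H) := by
  refine ⟨fun V G U P cs cs' _ _ h => h, forestTarget H Finset.univ,
    combReducible_forestTarget hH _ _ le_rfl _ Finset.card_univ, ?_⟩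
  rintro V G P cs v S U l hc - ⟨φ, h1, h2, h3, h4⟩
  simp only [Finset.mem_univ, forall_const] at h1 h2 h3 h4
  have hl := h4 l (by simp)
  have hvl : ∀ w, G.Adj v (l (φ w)) := fun w => hc.adj_center _ (hc.mem _ (h1 w))
  have hvn : ∀ w, ¬ G.Adj v (φ w) := fun w => (hc.nonadj _ (h1 w)).1
  have hlb : ∀ a b, G.Adj (l (φ a)) (φ b) ↔ a = b := by
    intro a b
    constructor
    · intro hadj
      by_contra hab
      exact hc.unique _ (h1 b) _ (hc.mem _ (h1 a)) (fun h => hab (hl a b h)) hadj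
    · rintro rfl
      exact hc.adj _ (h1 a)
  have hll : ∀ a b, ¬ G.Adj (l (φ a)) (l (φ b)) := fun a b =>
    hc.stable _ (hc.mem _ (h1 a)) _ (hc.mem _ (h1 b))
  have hnbl : ∀ a b, φ a ≠ l (φ b) := fun a b h => hvn a (h ▸ hvl b)
  have hnv : ∀ a, φ a ≠ v := fun a h => (hc.nonadj _ (h1 a)).2 h.symm
  have hnl : ∀ a, l (φ a) ≠ v := fun a => (hvl a).ne'
  refine ⟨⟨⟨Sum.elim φ (Sum.elim (fun a => l (φ a)) fun _ => v), ?_⟩, ?_⟩⟩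
  · rintro (a | a | a) (b | b | b) hab
    · simp [h2 a b hab]
    · exact (hnbl a b hab).elim
    · exact (hnv a hab).elim
    · exact (hnbl b a hab.symm).elim
    · simp [hl a b hab]
    · exact (hnl a hab).elim
    · exact (hnv b hab.symm).elim
    · exact (hnl b hab.symm).elim
    · rfl
  · rintro (a | a | a) (b | b | b)
    · change G.Adj (φ a) (φ b) ↔ _
      have : H.Adj a b → a ≠ b := fun h => h.ne
      simp only [starExpansion, SimpleGraph.fromRel_adj, h3, ne_eq, Sum.inl.injEq, H.adj_comm b a]
      tauto
    · change G.Adj (φ a) (l (φ b)) ↔ _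
      rw [G.adj_comm, hlb]
      simp [starExpansion, eq_comm]
    · change G.Adj (φ a) v ↔ _
      have := hvn a
      rw [G.adj_comm] at this
      simp [starExpansion, this]
    · change G.Adj (l (φ a)) (φ b) ↔ _
      simp [starExpansion, hlb, eq_comm]
    · change G.Adj (l (φ a)) (l (φ b)) ↔ _
      simp [starExpansion, hll]
    · change G.Adj (l (φ a)) v ↔ _
      simp [starExpansion, (hvl a).symm]
    · change G.Adj v (φ b) ↔ _
      simp [starExpansion, hvn]
    · change G.Adj v (l (φ b)) ↔ _
      simp [starExpansion, hvl]
    · change G.Adj v v ↔ _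
      simp [starExpansion]

/-- The logarithm of the ratio between the size of `T` and a degree bound `D`. -/
noncomputable def gap {V : Type} (T : Finset V) (D : ℕ) : ℝ := logCard T - Real.log D

/-- A large star cover, in the graph or in its complement, whose gap is at least `a`. -/
def HasStarCover {V : Type} (G : SimpleGraph V) (P : Finset V) (cs : List (V → V)) (a κ : ℝ) :
    Prop :=
  ∃ t v A T D, StarCover (side G t) P cs v A T D ∧ a ≤ gap T D ∧ logCard P ≤ logCard T + κ * gap T D

/-- A large set of bounded degree, in the graph or in its complement, whose gap is at least `a`. -/
def HasSparseSubset {V : Type} (G : SimpleGraph V) (P : Finset V) (a κ : ℝ) : Prop :=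
  ∃ t R D, R ⊆ P ∧ R.Nonempty ∧ 1 ≤ D ∧ (∀ x ∈ R, (nbrIn (side G t) x R).card ≤ D) ∧
    a ≤ gap R D ∧ logCard P ≤ logCard R + κ * gap R D

/-- The pairs over which the potential `logCard T + κ * gap T D` is maximised. -/
def IsCandidate {V : Type} (G : SimpleGraph V) (P : Finset V) (cs : List (V → V)) (σ y : ℝ)
    (T : Finset V) (D : ℕ) : Prop :=
  (∃ t v A, StarCover (side G t) P cs v A T D) ∧ y ≤ gap T D ∧
    Critical G σ (1 + 6 * σ * gap T D) T

/-- No label of `cs` is taken by a proportion of `P` larger than `exp (-m)`. -/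
def LabelsSmall {V : Type} (P : Finset V) (cs : List (V → V)) (m : ℝ) : Prop :=
  ∀ c ∈ cs, ∀ l, Real.log (labelClass c l P).card + m ≤ logCard P

lemma Critical.toSide {V : Type} {G : SimpleGraph V} {ρ s : ℝ} {P : Finset V}
    (h : Critical G ρ s P) (t : Bool) : Critical (side G t) ρ s P := by
  cases t
  · exact h.compl
  · exact h

lemma log_card_mono {V : Type} {A B : Finset V} (h : A ⊆ B) :
    Real.log A.card ≤ Real.log B.card := by
  rcases A.eq_empty_or_nonempty with rfl | hA
  · simpa using Real.log_natCast_nonneg B.card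
  · exact logCard_mono hA h

lemma gap_le_logCard {V : Type} (T : Finset V) (D : ℕ) : gap T D ≤ logCard T := by
  have := Real.log_natCast_nonneg D
  unfold gap
  linarith

/-- Around a vertex of maximum degree, a critical set of gap at least `y` in which no label is popular
contains a star cover of nearly full size. -/
def StarCoverBound (J : ℕ) (μ ρ y : ℝ) : Prop :=
  ∀ (V : Type) (G : SimpleGraph V) (P : Finset V) (cs : List (V → V)) (D : ℕ) (v : V),
    Critical G ρ 0 P → cs.length ≤ J → 1 ≤ D → (∀ x ∈ P, (nbrIn G x P).card ≤ D) → v ∈ P →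
    (nbrIn G v P).card = D → y ≤ gap P D → LabelsSmall P cs (μ * gap P D) →
    ∃ A T, StarCover G P cs v A T D ∧ logCard P ≤ logCard T + μ * gap P D

lemma exists_isCandidate_or_hasSparseSubset {J : ℕ} {μ ρ y₁ σ y κ' κ C ν m : ℝ}
    (hcover : StarCoverBound J μ ρ y₁) (hρ1 : ρ < 1) (hμ : 0 < μ) (hμκ' : 16 * μ ≤ κ')
    (hμC : 16 * C * μ ≤ 1) (hμκ : 4 * μ ≤ κ) (hκκ' : 4 * κ' ≤ κ) (hκ'C : 16 * C * κ' ≤ 1)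
    (hC : 1 ≤ C) (hσ : 0 < σ) (hσρ : σ < ρ) (hy : 0 < y) (hy₁ : y₁ ≤ y)
    (hslack : ∀ z, 2 * y ≤ z → 1 + 3 * σ * z ≤ (ρ - σ) * (μ / 8 * z))
    (hν : 8 * ν ≤ 1) (hνκ : 8 * ν ≤ κ)
    {V : Type} {G : SimpleGraph V} {P R : Finset V} {cs : List (V → V)} {D₀ : ℕ} {t : Bool}
    (hm : 0 ≤ m) (hcs : cs.length ≤ J) (hlab : LabelsSmall P cs m)
    (hRP : R ⊆ P) (hR : R.Nonempty)
    (hdeg : ∀ x ∈ R, (nbrIn (side G t) x R).card ≤ D₀) (hgap : 2 * y ≤ gap R D₀)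
    (hcrit : Critical G σ (1 + 3 * σ * gap R D₀) R)
    (hsize : logCard P ≤ logCard R + 2 * ν * m + κ' * gap R D₀) :
    HasSparseSubset G P (C * m) κ ∨ ∃ T D, IsCandidate G P cs σ y T D ∧
      logCard R + κ' * gap R D₀ / 2 ≤ logCard T + κ' * gap T D := by
  have hμ1 : 16 * μ ≤ 1 := by linarith [mul_le_mul_of_nonneg_right hC hμ.le]
  obtain ⟨Q, hQR, hQ, hQc, hQs⟩ := hcrit.extract hR ρ
  have hg0 := gap_le_logCard R D₀
  have hQR' : logCard R ≤ logCard Q + μ / 8 * gap R D₀ := by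
    have := hQs.trans (hslack _ hgap)
    have := le_of_mul_le_mul_left this (by linarith)
    linarith
  set z := gap R D₀ with hz
  have hz0 : 0 < z := by linarith
  have hμz : μ * z ≤ z / 16 := by linarith [mul_le_mul_of_nonneg_right hμ1 hz0.le]
  have hQpos : 0 < logCard Q := by linarith
  have hQ2 : 2 ≤ Q.card := by
    by_contra h
    have : (Q.card : ℝ) ≤ 1 := by exact_mod_cast (by omega : Q.card ≤ 1)
    have := Real.log_nonpos (by positivity) this
    unfold logCard at hQpos
    linarith
  obtain ⟨v, hv, hvmax⟩ := Finset.exists_max_image Q (fun x => (nbrIn (side G t) x Q).card) hQ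
  obtain ⟨D, hD⟩ : ∃ D, D = (nbrIn (side G t) v Q).card := ⟨_, rfl⟩
  have hD1 : 1 ≤ D := by
    obtain ⟨a, ha, b, hb, hab⟩ := (hQc.toSide t).exists_adj hρ1 hQ2
    rw [hD]
    exact (Finset.card_pos.2 ⟨b, mem_nbrIn.2 ⟨hb, hab⟩⟩).trans_le (hvmax a ha)
  have hDD₀ : D ≤ D₀ := by
    rw [hD]
    exact (Finset.card_le_card (nbrIn_mono _ _ hQR)).trans (hdeg v (hQR hv))
  have hlogD : Real.log D ≤ Real.log D₀ :=
    Real.log_le_log (by exact_mod_cast hD1) (by exact_mod_cast hDD₀)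
  obtain ⟨g, hg⟩ : ∃ g, g = gap Q D := ⟨_, rfl⟩
  have hgz : 7 / 8 * z ≤ g := by
    rw [hg, gap]
    unfold gap at hz
    linarith
  have hκ' : 0 < κ' := by linarith
  have hg0 : 0 < g := by linarith
  have hμg : μ * g ≤ g / 16 := by linarith [mul_le_mul_of_nonneg_right hμ1 hg0.le]
  by_cases hl : LabelsSmall Q cs (μ * gap Q D)
  · right
    obtain ⟨A, T, hT, hTs⟩ := hcover V (side G t) Q cs D v (hQc.toSide t) hcs hD1
      (fun x hx => (hvmax x hx).trans hD.ge) hv hD.symm (by rw [← hg]; linarith) hl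
    rw [← hg] at hTs
    have hTgap : gap T D = logCard T - logCard Q + g := by
      rw [hg, gap, gap]
      ring
    have hTR : T ⊆ R := hT.subset_right.trans hQR
    refine ⟨T, D, ⟨⟨t, v, A, hT.mono (hQR.trans hRP) (List.Subset.refl _)⟩, by linarith, ?_⟩, ?_⟩
    · refine (hcrit.subset hTR hT.nonempty).weaken le_rfl ?_
      have : σ * (3 * z + (logCard R - logCard T)) ≤ σ * (6 * gap T D) := by
        gcongr
        linarith
      linarith
    · have h1 : 16 * (μ * g) ≤ κ' * g := by linarith [mul_le_mul_of_nonneg_right hμκ' hg0.le]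
      have h2 : 16 * (μ * z) ≤ κ' * z := by linarith [mul_le_mul_of_nonneg_right hμκ' hz0.le]
      have h3 : κ' * (15 / 16 * g) ≤ κ' * gap T D := by
        gcongr
        linarith
      have h4 : κ' * (7 / 8 * z) ≤ κ' * g := by gcongr
      linarith [mul_pos hκ' hz0]
  · left
    simp only [LabelsSmall, not_forall, not_le] at hl
    obtain ⟨c, hc, l, hl⟩ := hl
    have h1 := hlab c hc l
    have h2 := log_card_mono (labelClass_mono c l (hQR.trans hRP))
    rw [← hg] at hl
    have hνm : ν * m ≤ m / 8 := by linarith [mul_le_mul_of_nonneg_right hν hm]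
    have hC' : C * (16 * κ' * z) ≤ z := by linarith [mul_le_mul_of_nonneg_right hκ'C hz0.le]
    have hC'' : C * (16 * μ * z) ≤ z := by linarith [mul_le_mul_of_nonneg_right hμC hz0.le]
    have hC''' : C * (16 * μ * g) ≤ g := by linarith [mul_le_mul_of_nonneg_right hμC hg0.le]
    have hmain : C * (3 / 4 * m) ≤ C * (κ' * z + μ / 8 * z + μ * g) := by
      gcongr
      linarith
    have hCm : C * m ≤ g := by linarith
    have hmg : m ≤ g := by linarith [mul_le_mul_of_nonneg_right hC hm]
    refine ⟨t, Q, D, hQR.trans hRP, hQ, hD1, fun x hx => (hvmax x hx).trans hD.ge, ?_, ?_⟩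
    · rw [← hg]
      exact hCm
    · rw [← hg]
      have h3 : 8 * (ν * m) ≤ κ * g :=
        calc 8 * (ν * m) = 8 * ν * m := by ring
          _ ≤ κ * m := by gcongr
          _ ≤ κ * g := by gcongr; linarith
      have h4 : 4 * (κ' * z) ≤ κ * z := by linarith [mul_le_mul_of_nonneg_right hκκ' hz0.le]
      have h5 : 4 * (μ * z) ≤ κ * z := by linarith [mul_le_mul_of_nonneg_right hμκ hz0.le]
      have h6 : κ * (7 / 8 * z) ≤ κ * g := by gcongr; linarith
      have h7 : 0 < κ * g := mul_pos (by linarith) hg0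
      linarith

lemma Critical.exists_sparse_subset {V : Type} {G : SimpleGraph V} {P : Finset V}
    {δ L σ ν m y r : ℝ} (hδ : 0 < δ)
    (hsmall : ∀ Q : Finset V, L ≤ Q.card → ∃ t R, R ⊆ Q ∧ R.Nonempty ∧ δ * Q.card ≤ R.card ∧
      ∀ x ∈ R, ((nbrIn (side G t) x R).card : ℝ) ≤ Real.exp (-(2 * y)) * R.card)
    (hL : 0 < L) (hr : -Real.log δ ≤ r) (hσ : 0 < σ) (hσr : σ * r ≤ 1)
    (hν8 : 8 * ν ≤ 1) (hy : 0 < y) (hmL : 2 * Real.log L ≤ m) (hmr : r ≤ ν * m)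
    (hmy : 2 * (2 * y + r) ≤ m) (hm : 0 < m) (hmP : m ≤ logCard P) (hP : P.Nonempty)
    (hcrit : Critical G (σ * ν / 2) (σ * ν / 2 * m) P) :
    ∃ t R D, R ⊆ P ∧ R.Nonempty ∧ 1 ≤ D ∧ (∀ x ∈ R, (nbrIn (side G t) x R).card ≤ D) ∧
      2 * y ≤ gap R D ∧ Critical G σ (1 + 3 * σ * gap R D) R ∧
      logCard P ≤ logCard R + 2 * ν * m := by
  obtain ⟨Q, hQP, hQ, hQc, hQs⟩ := hcrit.extract hP σ
  have hQ' : logCard P ≤ logCard Q + ν * m := by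
    have h1 : logCard Q ≤ logCard P := logCard_mono hQ hQP
    have h2 : σ * (1 / 2 * (logCard P - logCard Q)) ≤ (σ - σ * ν / 2) * (logCard P - logCard Q) := by
      have : 0 ≤ logCard P - logCard Q := by linarith
      rw [← mul_assoc]
      gcongr
      linarith [mul_le_mul_of_nonneg_left hν8 hσ.le]
    have h3 : σ * (1 / 2 * (logCard P - logCard Q)) ≤ σ * (ν / 2 * m) := by linarith
    have := le_of_mul_le_mul_left h3 hσ
    linarith
  have hνm : 8 * (ν * m) ≤ m := by linarith [mul_le_mul_of_nonneg_right hν8 hm.le]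
  have hLQ : L ≤ (Q.card : ℝ) := by
    have : Real.log L ≤ Real.log Q.card := by
      change _ ≤ logCard Q
      linarith
    rwa [Real.log_le_log_iff hL (by exact_mod_cast hQ.card_pos)] at this
  obtain ⟨t, R, hRQ, hR, hRs, hdeg⟩ := hsmall Q hLQ
  have hQ0 : (0 : ℝ) < Q.card := by exact_mod_cast hQ.card_pos
  have hR0 : (0 : ℝ) < R.card := by exact_mod_cast hR.card_pos
  have hRl : logCard Q ≤ logCard R + r := by
    have := Real.log_le_log (mul_pos hδ hQ0) hRs
    rw [Real.log_mul hδ.ne' hQ0.ne'] at this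
    unfold logCard
    linarith
  obtain ⟨D, hD⟩ : ∃ D, D = max 1 ⌊Real.exp (-(2 * y)) * R.card⌋₊ := ⟨_, rfl⟩
  have hgap : 2 * y ≤ gap R D := by
    unfold gap
    rcases le_total ⌊Real.exp (-(2 * y)) * (R.card : ℝ)⌋₊ 1 with h | h
    · rw [hD, max_eq_left h]
      simp only [Nat.cast_one, Real.log_one, sub_zero]
      linarith
    · rw [hD, max_eq_right h]
      have h1 : (⌊Real.exp (-(2 * y)) * (R.card : ℝ)⌋₊ : ℝ) ≤ Real.exp (-(2 * y)) * R.card :=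
        Nat.floor_le (mul_nonneg (Real.exp_pos _).le hR0.le)
      have h2 := Real.log_le_log (by exact_mod_cast h) h1
      rw [Real.log_mul (Real.exp_pos _).ne' hR0.ne', Real.log_exp] at h2
      unfold logCard
      linarith
  refine ⟨t, R, D, hRQ.trans hQP, hR, ?_, fun x hx => ?_, hgap, ?_, by linarith⟩
  · rw [hD]
    exact le_max_left _ _
  · rw [hD]
    exact (Nat.le_floor (hdeg x hx)).trans (le_max_right _ _)
  · refine (hQc.subset hRQ hR).weaken le_rfl ?_
    have h1 : σ * (logCard Q - logCard R) ≤ σ * r := by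
      gcongr
      linarith
    have h2 : 0 < σ * gap R D := mul_pos hσ (by linarith)
    linarith

lemma log_four_thirds_pos : 0 < Real.log (4 / 3) := Real.log_pos (by norm_num)

lemma IsCandidate.exists_comb_or_lt {V : Type} {G : SimpleGraph V} {P T : Finset V}
    {cs : List (V → V)} {σ y κ' w q : ℝ} {D N : ℕ} (h : IsCandidate G P cs σ y T D) (hσ : 0 < σ)
    (hκ' : κ' ≤ 1) (hw : 0 < w) (hwκ : 8 * w = κ' * Real.log (4 / 3))
    (hq : 2 * Real.exp (-q) = 1 - Real.exp (-w)) (hN : N ≤ 2 * Real.exp (y - q)) :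
    (∃ T' D', IsCandidate G P cs σ y T' D' ∧
      logCard T + κ' * gap T D < logCard T' + κ' * gap T' D') ∨
    ∃ t v S U l, Comb (side G t) P cs v S U l ∧ N ≤ S.card ∧ U ⊆ T ∧ U.Nonempty ∧
      logCard T ≤ logCard U + q ∧ ∀ x, (labelClass l x U).card ≤ D := by
  obtain ⟨⟨t, v, A, hT⟩, hy, hcrit⟩ := h
  obtain ⟨S, U, T', l, hUT, hT'T, hcard, hT', hSU, hcomb, hlab⟩ := hT.exists_comb
  have hT0 : (0 : ℝ) < T.card := by exact_mod_cast hT.nonempty.card_pos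
  have hD0 : (0 : ℝ) < D := by exact_mod_cast hT.pos
  have h43 := log_four_thirds_pos
  by_cases hS : (S.card : ℝ) * D ≤ 2 * Real.exp (-q) * T.card
  · left
    have hle : Real.exp (-w) * T.card ≤ T'.card := by
      have : (T.card : ℝ) ≤ T'.card + S.card * D := by exact_mod_cast hcard
      rw [hq, sub_mul, one_mul] at hS
      linarith
    have hT'0 : (0 : ℝ) < T'.card := (mul_pos (Real.exp_pos _) hT0).trans_le hle
    have hne : T'.Nonempty := Finset.card_pos.1 (by exact_mod_cast hT'0)
    have hl : logCard T ≤ logCard T' + w := by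
      have := Real.log_le_log (mul_pos (Real.exp_pos _) hT0) hle
      rw [Real.log_mul (Real.exp_pos _).ne' hT0.ne', Real.log_exp] at this
      unfold logCard
      linarith
    have hD' : (0 : ℝ) < (3 * D / 4 : ℕ) := by exact_mod_cast (hT' hne).pos
    have hlogD : Real.log (3 * D / 4 : ℕ) ≤ Real.log D - Real.log (4 / 3) := by
      rw [← Real.log_div hD0.ne' (by norm_num)]
      apply Real.log_le_log hD'
      have : ((3 * D / 4 : ℕ) : ℝ) ≤ ((3 * D : ℕ) : ℝ) / (4 : ℕ) := Nat.cast_div_le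
      push_cast at this
      linarith
    have hw43 : 8 * w ≤ Real.log (4 / 3) := by
      rw [hwκ]
      exact mul_le_of_le_one_left h43.le hκ'
    obtain ⟨g, hg⟩ : ∃ g, g = gap T D := ⟨_, rfl⟩
    obtain ⟨g', hg'⟩ : ∃ g, g = gap T' (3 * D / 4) := ⟨_, rfl⟩
    have hgg : g + (Real.log (4 / 3) - w) ≤ g' := by
      rw [hg, hg', gap, gap]
      linarith
    rw [← hg] at hy hcrit ⊢
    refine ⟨T', 3 * D / 4, ⟨⟨t, v, A, hT' hne⟩, ?_, ?_⟩, ?_⟩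
    · rw [← hg']
      linarith
    · rw [← hg']
      refine (hcrit.subset hT'T hne).weaken le_rfl ?_
      have h1 : σ * (6 * g + (logCard T - logCard T')) ≤ σ * (6 * g') := by
        gcongr
        linarith
      linarith
    · rw [← hg']
      have hκ0 : 0 ≤ κ' := by
        by_contra! h
        nlinarith
      have h1 : κ' * (g + (Real.log (4 / 3) - w)) ≤ κ' * g' := by gcongr
      have h2 : κ' * w ≤ w := mul_le_of_le_one_left hw.le hκ'
      linarith
  · right
    push Not at hS
    have hSN : (N : ℝ) ≤ S.card := by
      have h1 : Real.exp (y - q) * D ≤ Real.exp (-q) * T.card := by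
        rw [sub_eq_neg_add, Real.exp_add, mul_assoc]
        gcongr
        rw [← Real.exp_log hD0, ← Real.exp_add, ← Real.exp_log hT0]
        gcongr
        unfold gap logCard at hy
        linarith
      have h2 : 2 * Real.exp (y - q) * D ≤ S.card * D := by linarith
      exact hN.trans (le_of_mul_le_mul_right h2 hD0)
    have hU : Real.exp (-q) * T.card ≤ U.card := by
      have : (S.card : ℝ) * D ≤ 2 * U.card := by exact_mod_cast hSU
      linarith
    have hU0 : (0 : ℝ) < U.card := (mul_pos (Real.exp_pos _) hT0).trans_le hU
    refine ⟨t, v, S, U, l, hcomb, by exact_mod_cast hSN, hUT,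
      Finset.card_pos.1 (by exact_mod_cast hU0), ?_, hlab⟩
    have := Real.log_le_log (mul_pos (Real.exp_pos _) hT0) hU
    rw [Real.log_mul (Real.exp_pos _).ne' hT0.ne', Real.log_exp] at this
    unfold logCard
    linarith

lemma exists_isCandidate_forall_le {V : Type} {G : SimpleGraph V} {P : Finset V}
    {cs : List (V → V)} {σ y κ' : ℝ} {T₀ : Finset V} {D₀ : ℕ} (hy : 0 < y)
    (h₀ : IsCandidate G P cs σ y T₀ D₀) :
    ∃ T D, IsCandidate G P cs σ y T D ∧ ∀ T' D', IsCandidate G P cs σ y T' D' →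
      logCard T' + κ' * gap T' D' ≤ logCard T + κ' * gap T D := by
  classical
  have hmem : ∀ T D, IsCandidate G P cs σ y T D → (T, D) ∈
      (P.powerset ×ˢ Finset.range (P.card + 1)).filter (fun p => IsCandidate G P cs σ y p.1 p.2) := by
    intro T D h
    obtain ⟨t, v, A, hT⟩ := h.1
    refine Finset.mem_filter.2 ⟨Finset.mem_product.2
      ⟨Finset.mem_powerset.2 hT.subset_right, Finset.mem_range.2 ?_⟩, h⟩
    have h1 : Real.log D ≤ Real.log T.card := by
      have := h.2.1
      unfold gap logCard at this
      linarith
    rw [Real.log_le_log_iff (by exact_mod_cast hT.pos) (by exact_mod_cast hT.nonempty.card_pos),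
      Nat.cast_le] at h1
    exact Nat.lt_succ_of_le (h1.trans (Finset.card_le_card hT.subset_right))
  obtain ⟨⟨T, D⟩, hTD, hmax⟩ := Finset.exists_max_image _
    (fun p : Finset V × ℕ => logCard p.1 + κ' * gap p.1 p.2) ⟨_, hmem _ _ h₀⟩
  exact ⟨T, D, (Finset.mem_filter.1 hTD).2, fun T' D' h => hmax _ (hmem _ _ h)⟩

lemma exists_outcome_of_isCandidate {V : Type} {G : SimpleGraph V} {P : Finset V}
    {cs : List (V → V)} {goal : Prop} {σ y κ κ' C ν m w q ρ K : ℝ} {N : ℕ}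
    (hσ : 0 < σ) (hσρ : σ ≤ ρ) (hκ'0 : 0 < κ') (hκκ' : 4 * κ' ≤ κ) (hκ'C : 16 * C * κ' ≤ 1)
    (hC : 1 ≤ C) (hy : 0 < y) (hν : 8 * ν ≤ 1) (hνκ : 8 * ν ≤ κ) (hm : 0 ≤ m)
    (hw : 0 < w) (hwκ : 8 * w = κ' * Real.log (4 / 3))
    (hq : 2 * Real.exp (-q) = 1 - Real.exp (-w)) (hN : N ≤ 2 * Real.exp (y - q)) (hq0 : 0 < q)
    (hyK : 2 * C * (K + q) ≤ y) (hyq : 4 * C * q ≤ y) (hyκ : 2 * q ≤ κ' * y)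
    (hslack : ∀ g, y ≤ g → 1 + 7 * σ * g ≤ ρ * (g / (2 * C) - q))
    (hlab : LabelsSmall P cs m)
    (hstart : ∃ T D, IsCandidate G P cs σ y T D ∧ logCard P ≤ logCard T + κ' * gap T D + 2 * ν * m)
    (hsparse : ∀ (t : Bool) (R : Finset V) (D : ℕ), R ⊆ P → R.Nonempty →
      (∀ x ∈ R, (nbrIn (side G t) x R).card ≤ D) → 2 * y ≤ gap R D →
      Critical G σ (1 + 3 * σ * gap R D) R →
      logCard P ≤ logCard R + 2 * ν * m + κ' * gap R D →
      HasSparseSubset G P (C * m) κ ∨ ∃ T D', IsCandidate G P cs σ y T D' ∧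
        logCard R + κ' * gap R D / 2 ≤ logCard T + κ' * gap T D')
    (hcomb : ∀ (t : Bool) v S U l m', Comb (side G t) P cs v S U l → N ≤ S.card → U.Nonempty →
      K ≤ m' → m' ≤ logCard U → LabelsSmall U (l :: cs) m' → Critical G ρ (ρ * m') U →
      goal ∨ HasStarCover G U (l :: cs) (16 * C * m') (κ' / 12) ∨
        HasSparseSubset G U (16 * C * m') (κ' / 12)) :
    goal ∨ HasStarCover G P cs (C * m) κ ∨ HasSparseSubset G P (C * m) κ := by
  obtain ⟨T₀, D₀, hT₀, hP₀⟩ := hstart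
  obtain ⟨T, D, hT, hmax⟩ := exists_isCandidate_forall_le (κ' := κ') hy hT₀
  have hP : logCard P ≤ logCard T + κ' * gap T D + 2 * ν * m := by linarith [hmax _ _ hT₀]
  have hκ'1 : 16 * κ' ≤ 1 := by linarith [mul_le_mul_of_nonneg_right hC hκ'0.le]
  obtain ⟨⟨t₀, v₀, A₀, hcov⟩, hyg, hcrit⟩ := id hT
  have hgT := gap_le_logCard T D
  have hlogD : Real.log D = logCard T - gap T D := by
    unfold gap
    ring
  obtain ⟨g, hg⟩ : ∃ g, g = gap T D := ⟨_, rfl⟩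
  rw [← hg] at hP hyg hcrit hmax hgT hlogD
  have hg0 : 0 < g := by linarith
  have hνm : 8 * (ν * m) ≤ m := by linarith [mul_le_mul_of_nonneg_right hν hm]
  by_cases hCm : C * m ≤ g
  · refine Or.inr (Or.inl ⟨t₀, v₀, A₀, T, D, hcov, by rwa [← hg], ?_⟩)
    rw [← hg]
    have hmg : m ≤ g := by linarith [mul_le_mul_of_nonneg_right hC hm]
    have h1 : 8 * (ν * m) ≤ κ * g :=
      calc 8 * (ν * m) = 8 * ν * m := by ring
        _ ≤ κ * m := by gcongr
        _ ≤ κ * g := by gcongr; linarith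
    have h2 : 4 * (κ' * g) ≤ κ * g := by linarith [mul_le_mul_of_nonneg_right hκκ' hg0.le]
    linarith [mul_pos hκ'0 hg0]
  push Not at hCm
  rcases hT.exists_comb_or_lt (κ' := κ') hσ (by linarith) hw hwκ hq hN with
    ⟨T', D', hT', hlt⟩ | ⟨t, v, S, U, l, hc, hS, hUT, hU, hUq, hl⟩
  · rw [← hg] at hlt
    exact absurd (hmax _ _ hT') (not_le.2 hlt)
  have hC0 : 0 < C := by linarith
  obtain ⟨a, ha⟩ : ∃ a, a = g / (2 * C) := ⟨_, rfl⟩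
  have haC : 2 * C * a = g := by
    rw [ha]
    field_simp
  have ha0 : 0 < a := by
    rw [ha]
    exact div_pos hg0 (by linarith)
  have hag : 2 * a ≤ g := by linarith [mul_le_mul_of_nonneg_right hC ha0.le]
  have ham : 2 * a ≤ m := by
    have : C * (2 * a) ≤ C * m := by linarith
    exact le_of_mul_le_mul_left this hC0
  have hκ'a : 8 * (κ' * g) ≤ a := by
    rw [← haC]
    linarith [mul_le_mul_of_nonneg_right hκ'C ha0.le]
  have hqg : 4 * q ≤ g := by linarith [mul_le_mul_of_nonneg_right hC hq0.le]
  have hκq : 2 * q ≤ κ' * g := hyκ.trans (by gcongr)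
  have hKm : K ≤ a - q := by
    have : 2 * C * (K + q) ≤ 2 * C * a := by linarith
    have := le_of_mul_le_mul_left this (by linarith)
    linarith
  have hUc : Critical G ρ (ρ * (a - q)) U := by
    refine (hcrit.subset hUT hU).weaken hσρ ?_
    have h1 := hslack g hyg
    rw [← ha] at h1
    have h2 : σ * (logCard T - logCard U) ≤ σ * g := by
      gcongr
      linarith
    linarith
  have hUlab : LabelsSmall U (l :: cs) (a - q) := by
    intro c hcc x
    rcases List.mem_cons.1 hcc with rfl | hcc
    · have h1 : Real.log (labelClass c x U).card ≤ Real.log D := by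
        rcases Nat.eq_zero_or_pos (labelClass c x U).card with h0 | h0
        · rw [h0]
          simpa using Real.log_natCast_nonneg D
        · exact Real.log_le_log (by exact_mod_cast h0) (by exact_mod_cast hl x)
      linarith
    · have h1 := hlab c hcc x
      have h2 := log_card_mono (labelClass_mono c x hc.subset_right)
      linarith
  have hCaq : 4 * g ≤ 16 * C * (a - q) := by linarith
  rcases hcomb t v S U l (a - q) hc hS hU hKm (by linarith) hUlab hUc with h | h | h
  · exact Or.inl h
  · obtain ⟨t₁, v₁, A₁, T₁, D₁, hcov₁, hg₁, hs₁⟩ := h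
    obtain ⟨g₁, hgdef⟩ : ∃ x, x = gap T₁ D₁ := ⟨_, rfl⟩
    rw [← hgdef] at hg₁ hs₁
    have hκg : κ' * (4 * g) ≤ κ' * g₁ := by
      gcongr
      linarith
    have hκg' : κ' * g₁ ≤ g₁ / 16 := by
      linarith [mul_le_mul_of_nonneg_right hκ'1 (by linarith : 0 ≤ g₁)]
    have hcand : IsCandidate G P cs σ y T₁ D₁ := by
      refine ⟨⟨t₁, v₁, A₁, hcov₁.mono hc.subset_right (List.subset_cons_self _ _)⟩, ?_, ?_⟩
      · rw [← hgdef]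
        linarith
      · rw [← hgdef]
        refine (hcrit.subset (hcov₁.subset_right.trans hUT) hcov₁.nonempty).weaken le_rfl ?_
        have h1 : σ * (6 * g + (logCard T - logCard T₁)) ≤ σ * (6 * g₁) := by
          gcongr
          linarith
        linarith
    have := hmax _ _ hcand
    rw [← hgdef] at this
    linarith
  · obtain ⟨t₁, R, D₁, hRU, hR, hD₁, hdeg, hg₁, hs₁⟩ := h
    have key := hsparse t₁ R D₁ (hRU.trans hc.subset_right) hR hdeg
    obtain ⟨g₁, hgdef⟩ : ∃ x, x = gap R D₁ := ⟨_, rfl⟩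
    rw [← hgdef] at hg₁ hs₁ key
    have hκg : κ' * (4 * g) ≤ κ' * g₁ := by
      gcongr
      linarith
    have hκg' : κ' * g₁ ≤ g₁ / 16 := by
      linarith [mul_le_mul_of_nonneg_right hκ'1 (by linarith : 0 ≤ g₁)]
    have hRc : Critical G σ (1 + 3 * σ * g₁) R := by
      refine (hcrit.subset (hRU.trans hUT) hR).weaken le_rfl ?_
      have h1 : σ * (6 * g + (logCard T - logCard R)) ≤ σ * (3 * g₁) := by
        gcongr
        linarith
      linarith
    rcases key (by linarith) hRc (by linarith) with h | ⟨T₂, D₂, hcand, hlt⟩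
    · exact Or.inr (Or.inr h)
    · have := hmax _ _ hcand
      linarith

/-- Every slightly critical set in an `X`-free graph either meets one of the targets, or has a large
star cover, or a large sparse subset. -/
def OutcomeBound {k : ℕ} (X : SimpleGraph (Fin k)) (𝒯 : Bool → Target) (J : ℕ) (C κ ρ K : ℝ) :
    Prop :=
  ∀ (V : Type) (G : SimpleGraph V) (P : Finset V) (cs : List (V → V)) (m : ℝ),
    ¬ Nonempty (X ↪g G) → cs.length ≤ J → K ≤ m → m ≤ logCard P → LabelsSmall P cs m →
    P.Nonempty → Critical G ρ (ρ * m) P →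
    (∃ t, 𝒯 t V (side G t) P cs) ∨ HasStarCover G P cs (C * m) κ ∨ HasSparseSubset G P (C * m) κ

lemma OutcomeBound.weaken {k : ℕ} {X : SimpleGraph (Fin k)} {𝒯 : Bool → Target} {J : ℕ}
    {C κ ρ ρ' K K' : ℝ} (h : OutcomeBound X 𝒯 J C κ ρ K) (hρ : ρ' ≤ ρ) (hK : K ≤ K')
    (hK' : 0 ≤ K') : OutcomeBound X 𝒯 J C κ ρ' K' := fun V G P cs m hX hcs hm hmP hl hP hc =>
  h V G P cs m hX hcs (hK.trans hm) hmP hl hP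
    (hc.weaken hρ (mul_le_mul_of_nonneg_right hρ (hK'.trans hm)))

lemma exists_outcomeBound_of_forall_update {k : ℕ} (X : SimpleGraph (Fin k)) (N : ℕ)
    (𝒯 𝒯' : Bool → Target)
    (hmono : ∀ t V G (U P : Finset V) cs cs', U ⊆ P → cs ⊆ cs' → 𝒯 t V G U cs' → 𝒯 t V G P cs)
    (hred : ∀ t V G P cs v S U l, Comb G P cs v S U l → N ≤ S.card →
      𝒯' t V G U (l :: cs) → 𝒯 t V G P cs)
    (J : ℕ) (C κ : ℝ) (hC : 1 ≤ C) (hκ : 0 < κ) (hκ1 : κ ≤ 1)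
    (ih : ∀ t κ₁, 0 < κ₁ → κ₁ ≤ 1 → ∃ ρ K, 0 < ρ ∧ ρ < 1 ∧
      OutcomeBound X (Function.update 𝒯 t (𝒯' t)) (J + 1) (16 * C) κ₁ ρ K) :
    ∃ ρ K, 0 < ρ ∧ ρ < 1 ∧ OutcomeBound X 𝒯 J C κ ρ K := by
  have hC0 : 0 < C := by linarith
  obtain ⟨κ', hκ'0, hκκ', hκ'C⟩ : ∃ κ', 0 < κ' ∧ 4 * κ' ≤ κ ∧ 16 * C * κ' ≤ 1 := by
    refine ⟨min (κ / 4) (1 / (16 * C)), by positivity, ?_, ?_⟩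
    · linarith [min_le_left (κ / 4) (1 / (16 * C))]
    · calc 16 * C * min (κ / 4) (1 / (16 * C)) ≤ 16 * C * (1 / (16 * C)) := by
            gcongr
            exact min_le_right _ _
        _ = 1 := by field_simp
  obtain ⟨ρ₁, K₁, hρ₁, hρ₁', hK₁, hcomb⟩ : ∃ ρ₁ K₁, 0 < ρ₁ ∧ ρ₁ < 1 ∧ 0 ≤ K₁ ∧ ∀ t,
      OutcomeBound X (Function.update 𝒯 t (𝒯' t)) (J + 1) (16 * C) (κ' / 12) ρ₁ K₁ := by
    choose ρ K hρ hρ' h using fun t => ih t (κ' / 12) (by positivity) (by linarith)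
    refine ⟨min (ρ true) (ρ false), max 0 (max (K true) (K false)), lt_min (hρ _) (hρ _),
      (min_le_left _ _).trans_lt (hρ' _), le_max_left _ _, ?_⟩
    rintro (_ | _)
    · exact (h false).weaken (min_le_right _ _) ((le_max_right _ _).trans (le_max_right _ _))
        (le_max_left _ _)
    · exact (h true).weaken (min_le_left _ _) ((le_max_left _ _).trans (le_max_right _ _))
        (le_max_left _ _)
  obtain ⟨w, hw, hwκ⟩ : ∃ w, 0 < w ∧ 8 * w = κ' * Real.log (4 / 3) :=
    ⟨κ' * Real.log (4 / 3) / 8, by have := log_four_thirds_pos; positivity, by ring⟩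
  obtain ⟨q, hq0, hq⟩ : ∃ q, 0 < q ∧ 2 * Real.exp (-q) = 1 - Real.exp (-w) := by
    have h1 : Real.exp (-w) < 1 := by simpa using hw
    have h2 := Real.exp_pos (-w)
    have h3 : 0 < (1 - Real.exp (-w)) / 2 := by linarith
    refine ⟨-Real.log ((1 - Real.exp (-w)) / 2), ?_, ?_⟩
    · have := Real.log_neg h3 (by linarith)
      linarith
    · rw [neg_neg, Real.exp_log h3]
      ring
  have hCκ' : κ' ≤ C * κ' := le_mul_of_one_le_left hκ'0.le hC
  obtain ⟨μ, hμ⟩ : ∃ μ, μ = κ' / 16 := ⟨_, rfl⟩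
  have hμ0 : 0 < μ := by linarith
  obtain ⟨ρ₃, y₃, hρ₃, hρ₃', -, hcover⟩ := exists_starCover_of_critical J μ hμ0 (by linarith)
  obtain ⟨y, hy, hyK, hyq, hyκ, hyN, hyy, hyμ, hyρ⟩ : ∃ y, 0 < y ∧ 2 * C * (K₁ + q) ≤ y ∧
      4 * C * q ≤ y ∧ 2 * q ≤ κ' * y ∧ q + N ≤ y ∧ y₃ ≤ y ∧ 16 ≤ ρ₃ * μ * y ∧ 8 * C ≤ ρ₁ * y := by
    have ht := fun a : ℝ => Filter.eventually_ge_atTop a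
    have hm := fun (a b : ℝ) (hb : 0 < b) =>
      (Filter.tendsto_id.const_mul_atTop hb).eventually_ge_atTop a
    obtain ⟨y, hy⟩ := ((Filter.eventually_gt_atTop (0 : ℝ)).and <| (ht (2 * C * (K₁ + q))).and <|
      (ht (4 * C * q)).and <| (hm (2 * q) κ' hκ'0).and <| (ht (q + N)).and <| (ht y₃).and <|
      (hm 16 (ρ₃ * μ) (by positivity)).and (hm (8 * C) ρ₁ hρ₁)).exists
    exact ⟨y, hy⟩
  have hN : (N : ℝ) ≤ 2 * Real.exp (y - q) := by
    have h1 := Real.add_one_le_exp (y - q)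
    have h2 := Real.exp_pos (y - q)
    linarith
  obtain ⟨δ, L, hδ, hL, hsmall⟩ := exists_small_degree_subset k X (Real.exp (-(2 * y)))
    (Real.exp_pos _)
  obtain ⟨r, hr0, hr⟩ : ∃ r : ℝ, 0 < r ∧ -Real.log δ ≤ r :=
    ⟨max 1 (-Real.log δ), lt_max_of_lt_left one_pos, le_max_right _ _⟩
  obtain ⟨σ, hσ, hσ₃, hσ₁, hσr⟩ : ∃ σ, 0 < σ ∧ 96 * σ ≤ ρ₃ * μ ∧ 56 * C * σ ≤ ρ₁ ∧ σ * r ≤ 1 := by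
    refine ⟨min (ρ₃ * μ / 96) (min (ρ₁ / (56 * C)) (1 / r)), by positivity, ?_, ?_, ?_⟩
    · linarith [min_le_left (ρ₃ * μ / 96) (min (ρ₁ / (56 * C)) (1 / r))]
    · rw [mul_comm, ← le_div_iff₀ (by positivity)]
      exact (min_le_right _ _).trans (min_le_left _ _)
    · rw [← le_div_iff₀ hr0]
      exact (min_le_right _ _).trans (min_le_right _ _)
  have hρμ : ρ₃ * μ ≤ ρ₃ := mul_le_of_le_one_right hρ₃.le (by linarith)
  have hσρ₃ : 2 * σ ≤ ρ₃ := by linarith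
  have hσρ₁ : 56 * σ ≤ ρ₁ := by linarith [mul_le_mul_of_nonneg_right hC hσ.le]
  have hslack₃ : ∀ z, 2 * y ≤ z → 1 + 3 * σ * z ≤ (ρ₃ - σ) * (μ / 8 * z) := by
    intro z hz
    have hz0 : 0 < z := by linarith
    have h1 : ρ₃ / 2 * (μ / 8 * z) ≤ (ρ₃ - σ) * (μ / 8 * z) := by
      gcongr
      linarith
    have h2 : ρ₃ * μ * (2 * y) ≤ ρ₃ * μ * z := by gcongr
    have h3 := mul_le_mul_of_nonneg_right hσ₃ hz0.le
    linarith
  have hslack₁ : ∀ g, y ≤ g → 1 + 7 * σ * g ≤ ρ₁ * (g / (2 * C) - q) := by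
    intro g hg
    have hg0 : 0 < g := by linarith
    have h1 : q ≤ g / (4 * C) := by
      rw [le_div_iff₀ (by positivity)]
      linarith
    have h2 : ρ₁ * (g / (4 * C)) ≤ ρ₁ * (g / (2 * C) - q) := by
      gcongr
      have : g / (2 * C) = g / (4 * C) + g / (4 * C) := by
        field_simp
        norm_num
      linarith
    refine le_trans ?_ h2
    rw [← mul_div_assoc, le_div_iff₀ (by positivity)]
    have h3 : ρ₁ * y ≤ ρ₁ * g := by gcongr
    have h4 := mul_le_mul_of_nonneg_right hσ₁ hg0.le
    linarith
  obtain ⟨ν, hν⟩ : ∃ ν, ν = κ / 8 := ⟨_, rfl⟩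
  have hν0 : 0 < ν := by linarith
  have hσν : σ * ν ≤ σ := mul_le_of_le_one_right hσ.le (by linarith)
  refine ⟨σ * ν / 2, 2 * |Real.log L| + r / ν + 2 * (2 * y + r), by positivity, by linarith, ?_⟩
  intro V G P cs m hX hcs hm hmP hlab hP hcrit
  have habs := abs_nonneg (Real.log L)
  have hrν : 0 < r / ν := by positivity
  have hm0 : 0 < m := by linarith
  have hmr : r ≤ ν * m := by
    rw [mul_comm, ← div_le_iff₀ hν0]
    linarith
  have hA := fun (t : Bool) (R : Finset V) (D : ℕ) (hRP : R ⊆ P) (hR : R.Nonempty)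
      (hdeg : ∀ x ∈ R, (nbrIn (side G t) x R).card ≤ D) (hgap : 2 * y ≤ gap R D)
      (hRc : Critical G σ (1 + 3 * σ * gap R D) R)
      (hRs : logCard P ≤ logCard R + 2 * ν * m + κ' * gap R D) =>
    exists_isCandidate_or_hasSparseSubset (κ := κ) (C := C) hcover hρ₃' hμ0 (by linarith)
      (by rw [hμ]; linarith) (by linarith) hκκ' hκ'C hC hσ (by linarith) hy hyy hslack₃
      (by linarith) (by linarith) hm0.le hcs hlab hRP hR hdeg hgap hRc hRs
  obtain ⟨t₀, R₀, D₀, hRP₀, hR₀, -, hdeg₀, hgap₀, hc₀, hs₀⟩ := hcrit.exists_sparse_subset hδ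
    (hsmall V G hX) hL hr hσ hσr (by linarith) hy (by linarith [le_abs_self (Real.log L)]) hmr
    (by linarith) hm0 hmP hP
  have hκgap : 0 ≤ κ' * gap R₀ D₀ := mul_nonneg hκ'0.le (by linarith)
  rcases hA t₀ R₀ D₀ hRP₀ hR₀ hdeg₀ hgap₀ hc₀ (by linarith) with h | ⟨T₀, D₁, hcand, hT₀⟩
  · exact Or.inr (Or.inr h)
  refine exists_outcome_of_isCandidate hσ (by linarith) hκ'0 hκκ' hκ'C hC hy (by linarith)
    (by linarith) hm0.le hw hwκ hq hN hq0 hyK hyq hyκ hslack₁ hlab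
    ⟨T₀, D₁, hcand, by linarith⟩ hA ?_
  intro t v S U l m' hc hS hU hKm hmU hUlab hUc
  refine (hcomb t V G U (l :: cs) m' hX (by simpa using hcs) hKm hmU hUlab hU hUc).imp_left ?_
  rintro ⟨t', ht'⟩
  by_cases htt : t' = t
  · subst htt
    rw [Function.update_self] at ht'
    exact ⟨t', hred t' V _ P cs v S U l hc hS ht'⟩
  · rw [Function.update_of_ne htt] at ht'
    exact ⟨t', hmono t' V _ U P cs (l :: cs) hc.subset_right (List.subset_cons_self _ _) ht'⟩

lemma exists_outcomeBound {k : ℕ} (X : SimpleGraph (Fin k)) (N : ℕ) (n : Bool → ℕ)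
    (𝒯 : Bool → Target) (h𝒯 : ∀ t, CombReducible N (n t) (𝒯 t)) (J : ℕ) (C κ : ℝ) (hC : 1 ≤ C)
    (hκ : 0 < κ) (hκ1 : κ ≤ 1) : ∃ ρ K, 0 < ρ ∧ ρ < 1 ∧ OutcomeBound X 𝒯 J C κ ρ K := by
  obtain ⟨s, hs⟩ : ∃ s, s = n true + n false := ⟨_, rfl⟩
  induction s using Nat.strong_induction_on generalizing n 𝒯 J C κ with
  | _ s ih =>
  by_cases h0 : ∃ t, n t = 0
  · obtain ⟨t, ht⟩ := h0
    have h := h𝒯 t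
    rw [ht] at h
    exact ⟨1 / 2, 0, by norm_num, by norm_num, fun V G P cs m _ _ _ _ _ hP _ =>
      Or.inl ⟨t, h V _ P cs hP⟩⟩
  push Not at h0
  have hsucc : ∀ t, CombReducible N (n t - 1 + 1) (𝒯 t) := by
    intro t
    rw [Nat.sub_add_cancel (Nat.one_le_iff_ne_zero.2 (h0 t))]
    exact h𝒯 t
  choose hmono 𝒯' hred' hred using hsucc
  refine exists_outcomeBound_of_forall_update X N 𝒯 𝒯' hmono hred J C κ hC hκ hκ1 ?_
  intro t κ₁ hκ₁ hκ₁'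
  have h1 := h0 true
  have h2 := h0 false
  refine ih _ ?_ (Function.update n t (n t - 1)) _ ?_ (J + 1) (16 * C) κ₁ (by linarith) hκ₁ hκ₁' rfl
  · cases t <;> simp [hs] <;> omega
  · intro t'
    by_cases htt : t' = t
    · subst htt
      rw [Function.update_self, Function.update_self]
      exact hred' t'
    · rw [Function.update_of_ne htt, Function.update_of_ne htt]
      exact h𝒯 t'

lemma cliqueNumIn_univ_le {V : Type} [Fintype V] (G : SimpleGraph V) :
    cliqueNumIn G Finset.univ ≤ G.cliqueNum := by
  obtain ⟨Q, -, hQ, hc⟩ := exists_isClique_card_eq G (Finset.univ : Finset V)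
  rw [← hc]
  exact hQ.card_le_cliqueNum

/-- For a forest `H` with star-expansion `H'`, the set `{H̄, H'}` has the Erdős–Hajnal
property. -/
theorem stmt_17 {W : Type*} [Fintype W] (H : SimpleGraph W) (hH : H.IsAcyclic) :
    ∃ τ : ℝ, 0 < τ ∧
      ∀ (V : Type) [Fintype V] (G : SimpleGraph V),
        ¬ Nonempty (Hᶜ ↪g G) →
        ¬ Nonempty (starExpansion H ↪g G) →
        (Fintype.card V : ℝ) ^ τ ≤ ((max (alphaNum G) (omegaNum G) : ℕ) : ℝ) := by
  have e : Hᶜ ≃g Hᶜ.map (Fintype.equivFin W).toEmbedding := Iso.map _ _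
  obtain ⟨ρ, K, hρ, -, hbound⟩ := exists_outcomeBound
    (Hᶜ.map (Fintype.equivFin W).toEmbedding) (Fintype.card W)
    (fun t => if t then Fintype.card W + 1 else Fintype.card W)
    (fun t => if t then starTarget H else forestTarget H Finset.univ)
    (by
      rintro (_ | _)
      · exact combReducible_forestTarget hH _ _ le_rfl _ Finset.card_univ
      · exact combReducible_starTarget hH)
    0 2 1 one_le_two one_pos le_rfl
  have hlog2 : 0 < Real.log 2 := Real.log_pos one_lt_two
  obtain ⟨τ, hτ, hτρ, hτK⟩ : ∃ τ, 0 < τ ∧ τ ≤ ρ ∧ τ * max K 1 ≤ Real.log 2 := by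
    have hK : 0 < max K 1 := lt_max_of_lt_right one_pos
    refine ⟨min ρ (Real.log 2 / max K 1), by positivity, min_le_left _ _, ?_⟩
    rw [← le_div_iff₀ hK]
    exact min_le_right _ _
  refine ⟨τ / 2, by positivity, fun V _ G hH₁ hH₂ => ?_⟩
  rcases isEmpty_or_nonempty V with hV | hV
  · rw [Fintype.card_eq_zero, Nat.cast_zero, Real.zero_rpow (by positivity)]
    positivity
  obtain ⟨P, -, hP, hPc, hPs⟩ := exists_critical_subset G τ (Finset.univ_nonempty (α := V))
  have hPsmall : P.card < 2 := by
    by_contra! hP2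
    obtain ⟨x, hx⟩ := hP
    have hlow : Real.log 2 ≤ logHom G P :=
      Real.log_le_log two_pos (by exact_mod_cast two_le_homProd G hP2)
    have hup := hPc {x} (by simpa) (by simp)
    simp only [logCard, logHom, homProd_singleton, Finset.card_singleton, Nat.cast_one,
      Real.log_one] at hup hlow
    obtain ⟨m, hm⟩ : ∃ m, m = logCard P := ⟨_, rfl⟩
    have hmK : max K 1 ≤ m := by
      have : τ * max K 1 ≤ τ * m := by
        rw [hm, logCard]
        linarith
      exact le_of_mul_le_mul_left this hτ
    have hm0 : 0 < m := one_pos.trans_le ((le_max_right _ _).trans hmK)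
    rcases hbound V G P [] m (fun ⟨f⟩ => hH₁ ⟨f.comp e.toEmbedding⟩) le_rfl
      ((le_max_left _ _).trans hmK) hm.le (by simp [LabelsSmall]) ⟨x, hx⟩
      (hPc.weaken hτρ (by positivity)) with
      ⟨t, ht⟩ | ⟨t, v, A, T, D, hT, hg, -⟩ | ⟨t, R, D, hRP, hR, -, -, hg, -⟩
    · cases t
      · obtain ⟨φ, -, hφ, hadj, -⟩ := ht
        simp only [Finset.mem_univ, forall_const] at hφ hadj
        refine hH₁ ⟨⟨⟨φ, fun a b => hφ a b⟩, fun {a b} => ?_⟩⟩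
        have h1 := hadj a b
        have h2 : φ a = φ b ↔ a = b := ⟨hφ a b, fun h => h ▸ rfl⟩
        simp only [side, compl_adj] at h1
        change G.Adj (φ a) (φ b) ↔ Hᶜ.Adj a b
        rw [compl_adj, ← h1, ne_eq, ne_eq, h2]
        have h3 : G.Adj (φ a) (φ b) → ¬ a = b := fun h hab => h.ne (h2.2 hab)
        tauto
      · exact hH₂ ht
    · have h1 := gap_le_logCard T D
      have h2 := logCard_mono hT.nonempty hT.subset_right
      linarith
    · have h1 := gap_le_logCard R D
      have h2 := logCard_mono hR hRP
      linarith
  have hP1 : P.card = 1 := le_antisymm (by omega) hP.card_pos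
  have hV0 : (0 : ℝ) < Fintype.card V := by exact_mod_cast Fintype.card_pos
  have hle : τ * Real.log (Fintype.card V) ≤ logHom G Finset.univ := by
    have h1 := logHom_nonneg G P
    have h2 : logCard P = 0 := by simp [logCard, hP1]
    have h3 : logCard (Finset.univ : Finset V) = Real.log (Fintype.card V) := rfl
    rw [h2, h3, sub_zero] at hPs
    linarith
  obtain ⟨M, hM⟩ : ∃ M, M = max (alphaNum G) (omegaNum G) := ⟨_, rfl⟩
  have hprod : homProd G Finset.univ ≤ M * M := by
    have h1 : cliqueNumIn G Finset.univ ≤ M :=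
      (cliqueNumIn_univ_le G).trans (hM ▸ le_max_right _ _)
    have h2 : cliqueNumIn Gᶜ Finset.univ ≤ M :=
      (cliqueNumIn_univ_le Gᶜ).trans (hM ▸ le_max_left _ _)
    unfold homProd
    gcongr
  have hpos : 1 ≤ homProd G Finset.univ := one_le_homProd G Finset.univ_nonempty
  have hM0 : (0 : ℝ) < M := by
    have : 0 < M := by
      rcases Nat.eq_zero_or_pos M with h | h
      · simp [h] at hprod
        omega
      · exact h
    exact_mod_cast this
  rw [← hM, ← Real.log_le_log_iff (by positivity) hM0, Real.log_rpow hV0]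
  have h1 : logHom G Finset.univ ≤ Real.log M + Real.log M := by
    rw [← Real.log_mul hM0.ne' hM0.ne']
    exact Real.log_le_log (by exact_mod_cast hpos) (by exact_mod_cast hprod)
  linarith
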